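/- arXiv:1211.5338 — 13 statements merged into one kernel-verified Lean document; each statement's English description precedes it below -/
import Mathlib

section
/- Let p be a tropical Plücker vector of rank m on {1,…,n}. Then supp(p) satisfies the basis exchange property: for all A, B ∈ supp(p) and every a ∈ A∖B there exists b ∈ B∖A with (A∖{a})∪{b} ∈ supp(p). In particular, if supp(p) is nonempty then there exists a matroid on {1,…,n} whose set of bases is exactly supp(p). -/
open Finset

def IsTropPlucker (n m : ℕ) (p : Finset (Fin n) → WithTop ℝ) : Prop :=
  ∀ S T : Finset (Fin n), S.card = m - 1 → T.card = m + 1 →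
    ∀ i ∈ T \ S, ∃ j ∈ T \ S, j ≠ i ∧
      p (insert j S) + p (T.erase j) ≤ p (insert i S) + p (T.erase i)

def suppMem (n m : ℕ) (p : Finset (Fin n) → WithTop ℝ) (B : Finset (Fin n)) : Prop :=
  B.card = m ∧ p B ≠ ⊤

def circVec (n : ℕ) (p : Finset (Fin n) → WithTop ℝ) (S : Finset (Fin n)) :
    Fin n → WithTop ℝ := fun i => if i ∈ S then p (S.erase i) else ⊤

def TropOrth (n : ℕ) (x y : Fin n → WithTop ℝ) : Prop :=
  (∀ i, x i + y i = ⊤) ∨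
    ∃ i j : Fin n, i ≠ j ∧ x i + y i = x j + y j ∧ ∀ k, x i + y i ≤ x k + y k

def memL (n m : ℕ) (p : Finset (Fin n) → WithTop ℝ) (x : Fin n → WithTop ℝ) : Prop :=
  ∀ S : Finset (Fin n), S.card = m + 1 → TropOrth n x (circVec n p S)

noncomputable def wgt (n : ℕ) (p : Finset (Fin n) → WithTop ℝ) (v : Fin n → ℝ)
    (B : Finset (Fin n)) : ℝ := -((p B).untopD 0) + ∑ i ∈ B, v i

def memSigma (n m : ℕ) (p : Finset (Fin n) → WithTop ℝ) (B : Finset (Fin n))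
    (v : Fin n → ℝ) : Prop :=
  ∀ A : Finset (Fin n), suppMem n m p A → wgt n p v A ≤ wgt n p v B

def memLocal (n m : ℕ) (p : Finset (Fin n) → WithTop ℝ) (B : Finset (Fin n))
    (v : Fin n → ℝ) : Prop :=
  memSigma n m p B v ∧ memL n m p (fun i => (v i : WithTop ℝ))

noncomputable def fB (n : ℕ) (p : Finset (Fin n) → WithTop ℝ) (B : Finset (Fin n))
    (x : {i : Fin n // i ∈ B} → ℝ) : Fin n → ℝ := fun i =>
  if h : i ∈ B then x ⟨i, h⟩
  else (B.attach.inf fun b => (x b : WithTop ℝ) + p ((insert i B).erase b.1)).untopD 0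
    - (p B).untopD 0

noncomputable def augMat (n : ℕ) (B : Finset (Fin n))
    (V : {i : Fin n // i ∈ B} → {j : Fin n // j ∉ B} → WithTop ℝ) :
    {i : Fin n // i ∈ B} → Fin n → WithTop ℝ := fun i j =>
  if h : j ∈ B then (if j = i.1 then 0 else ⊤) else V i ⟨j, h⟩

noncomputable def tauV (n : ℕ) (B : Finset (Fin n))
    (V : {i : Fin n // i ∈ B} → {j : Fin n // j ∉ B} → WithTop ℝ)
    (A : Finset (Fin n)) : WithTop ℝ :=
  Finset.univ.inf fun σ : {i : Fin n // i ∈ B} ≃ {j : Fin n // j ∈ A} =>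
    ∑ i : {i : Fin n // i ∈ B}, augMat n B V i (σ i).1


/-- The support of a tropical Plücker vector satisfies the basis
exchange property; in particular, if nonempty, it is the set of bases of a matroid. -/
theorem supp_basis_exchange (n m : ℕ) (hm : 1 ≤ m) (hmn : m ≤ n)
    (p : Finset (Fin n) → WithTop ℝ) (hp : IsTropPlucker n m p) :
    (∀ A B : Finset (Fin n), suppMem n m p A → suppMem n m p B →
      ∀ a ∈ A \ B, ∃ b ∈ B \ A, suppMem n m p (insert b (A.erase a))) ∧
    ((∃ B, suppMem n m p B) →
      ∃ M : Matroid (Fin n), ∀ S : Set (Fin n),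
        M.IsBase S ↔ ∃ A : Finset (Fin n), (A : Set (Fin n)) = S ∧ suppMem n m p A) := by
  have key : ∀ A B : Finset (Fin n), suppMem n m p A → suppMem n m p B →
      ∀ a ∈ A \ B, ∃ b ∈ B \ A, suppMem n m p (insert b (A.erase a)) := by
    intro A B hA hB a ha
    obtain ⟨haA, haB⟩ := Finset.mem_sdiff.mp ha
    obtain ⟨hAc, hAp⟩ := hA
    obtain ⟨hBc, hBp⟩ := hB
    have hS : (A.erase a).card = m - 1 := by rw [Finset.card_erase_of_mem haA, hAc]
    have hT : (insert a B).card = m + 1 := by rw [Finset.card_insert_of_notMem haB, hBc]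
    obtain ⟨j, hj, hja, hle⟩ := hp (A.erase a) (insert a B) hS hT a (by simp)
    rw [Finset.insert_erase haA, Finset.erase_insert haB] at hle
    have hjB : j ∈ B ∧ j ∉ A := by
      simp only [Finset.mem_sdiff, Finset.mem_insert, Finset.mem_erase] at hj
      tauto
    have hfin : p A + p B ≠ ⊤ := WithTop.add_ne_top.mpr ⟨hAp, hBp⟩
    have hfin2 := WithTop.add_ne_top.mp (ne_top_of_le_ne_top hfin hle)
    refine ⟨j, Finset.mem_sdiff.mpr hjB, ?_, hfin2.1⟩
    rw [Finset.card_insert_of_notMem (fun h => hjB.2 (Finset.mem_of_mem_erase h)), hS]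
    omega
  refine ⟨key, ?_⟩
  rintro ⟨B, hB⟩
  refine ⟨Matroid.ofIsBaseOfFinite (E := Set.univ) Set.finite_univ
    (fun S => ∃ A : Finset (Fin n), (A : Set (Fin n)) = S ∧ suppMem n m p A)
    ⟨B, B, rfl, hB⟩ ?_ (fun _ _ => Set.subset_univ _), fun S => Iff.rfl⟩
  rintro _ _ ⟨X, rfl, hX⟩ ⟨Y, rfl, hY⟩ a ha
  obtain ⟨b, hb, h⟩ := key X Y hX hY a (by simpa using ha)
  exact ⟨b, by simpa using hb, _, by simp, h⟩
end

section
/- Let p be a tropical Plücker vector of rank m on {1,…,n} and let d, e ∈ 𝕋ⁿ be circuits of p. If a, b ∈ {1,…,n} satisfy d_a < e_a and d_b = e_b ≠ ∞, then there exists a circuit f of p with f_b = ∞, f_a = d_a, and f_i ≥ min(d_i, e_i) for every i ∈ {1,…,n}. -/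
open Finset

/-- A circuit of `p`: a vector of the form `c_S + λ·𝟏` for some `(m+1)`-subset `S`
with `c_S` not identically `∞` and some `λ ∈ ℝ`. -/
def IsCircuitOf (n m : ℕ) (p : Finset (Fin n) → WithTop ℝ) (d : Fin n → WithTop ℝ) : Prop :=
  ∃ (S : Finset (Fin n)) (lam : ℝ), S.card = m + 1 ∧ (∃ i, circVec n p S i ≠ ⊤) ∧
    ∀ i, d i = circVec n p S i + (lam : WithTop ℝ)

/-- Circuits are tropically orthogonal to cocircuits. -/
theorem circ_orth (n m : ℕ) (p : Finset (Fin n) → WithTop ℝ) (hp : IsTropPlucker n m p)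
    (d : Fin n → WithTop ℝ) (hd : IsCircuitOf n m p d) (S : Finset (Fin n))
    (hS : S.card = m - 1) (i : Fin n) (hi : i ∉ S) (hdi : d i ≠ ⊤) :
    ∃ j, j ∉ S ∧ j ≠ i ∧ p (insert j S) + d j ≤ p (insert i S) + d i := by
  obtain ⟨T, lam, hT, -, hd⟩ := hd
  have hiT : i ∈ T := by
    by_contra h
    apply hdi
    rw [hd]
    simp [circVec, h]
  obtain ⟨j, hj, hji, hle⟩ := hp S T hS hT i (by simp [hi, hiT])
  simp only [Finset.mem_sdiff] at hj
  refine ⟨j, hj.2, hji, ?_⟩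
  rw [hd, hd]
  simp only [circVec, hj.1, hiT, if_true]
  rw [← add_assoc, ← add_assoc]
  gcongr

/-- Valuated elimination for circuits of a tropical Plücker vector. -/
theorem valuated_elimination (n m : ℕ) (hm : 1 ≤ m) (hmn : m ≤ n)
    (p : Finset (Fin n) → WithTop ℝ) (hp : IsTropPlucker n m p)
    (d e : Fin n → WithTop ℝ) (hd : IsCircuitOf n m p d) (he : IsCircuitOf n m p e)
    (a b : Fin n) (hab : d a < e a) (hb : d b = e b) (hbne : e b ≠ ⊤) :
    ∃ f : Fin n → WithTop ℝ, IsCircuitOf n m p f ∧ f b = ⊤ ∧ f a = d a ∧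
      ∀ i, min (d i) (e i) ≤ f i := by
  have hne : a ≠ b := by
    rintro rfl
    exact absurd hb hab.ne
  obtain ⟨da, hda⟩ : ∃ r : ℝ, (r : WithTop ℝ) = d a :=
    WithTop.ne_top_iff_exists.1 hab.ne_top
  -- the large constant replacing infinity
  obtain ⟨M, hM⟩ : ∃ M : ℝ, ∀ B B' : Finset (Fin n),
      (p B').untopD 0 - (p B).untopD 0 + da < M := by
    obtain ⟨M, hM⟩ := (Set.finite_range (fun x : Finset (Fin n) × Finset (Fin n) =>
      (p x.2).untopD 0 - (p x.1).untopD 0 + da)).bddAbove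
    refine ⟨M + 1, fun B B' => ?_⟩
    have := hM ⟨(B, B'), rfl⟩
    simp only at this
    linarith
  set G : Fin n → ℝ := fun i => (min (d i) (e i)).untopD M with hG
  set q : Finset (Fin n) → ℝ := fun B => (p B).untopD 0 + ∑ i ∈ B, G i with hq
  have hGa : G a = da := by
    simp only [hG]
    rw [min_eq_left hab.le, ← hda, WithTop.untopD_coe]
  have hqi : ∀ (S : Finset (Fin n)) (x : Fin n), x ∉ S →
      q (insert x S) = (p (insert x S)).untopD 0 + (G x + ∑ i ∈ S, G i) := by
    intro S x hx
    simp only [hq, Finset.sum_insert hx]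
  -- a minimizer avoiding `b`
  have hex : ∃ B : Finset (Fin n), (B.card = m ∧ p B ≠ ⊤ ∧ b ∉ B) ∧
      ∀ A : Finset (Fin n), A.card = m → p A ≠ ⊤ → b ∉ A → q B ≤ q A := by
    have hne' : (Finset.univ.filter
        (fun B : Finset (Fin n) => B.card = m ∧ p B ≠ ⊤ ∧ b ∉ B)).Nonempty := by
      obtain ⟨E, lam, hE, -, he⟩ := he
      have hbE : b ∈ E := by
        by_contra h
        apply hbne
        rw [he]
        simp [circVec, h]
      refine ⟨E.erase b, ?_⟩
      simp only [Finset.mem_filter, Finset.mem_univ, true_and]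
      refine ⟨by rw [Finset.card_erase_of_mem hbE, hE]; rfl, ?_, by simp⟩
      intro h
      apply hbne
      rw [he]
      simp [circVec, hbE, h]
    obtain ⟨B, hB, hmin⟩ := Finset.exists_min_image _ q hne'
    refine ⟨B, by simpa using hB, fun A h1 h2 h3 => hmin A ?_⟩
    simp only [Finset.mem_filter, Finset.mem_univ, true_and]
    exact ⟨h1, h2, h3⟩
  -- a minimizer avoiding `a` and `b`
  have hex2 : ∃ B : Finset (Fin n), (B.card = m ∧ p B ≠ ⊤ ∧ b ∉ B ∧ a ∉ B) ∧
      ∀ A : Finset (Fin n), A.card = m → p A ≠ ⊤ → b ∉ A → q B ≤ q A := by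
    obtain ⟨B, ⟨hBc, hBp, hbB⟩, hmin⟩ := hex
    by_cases haB : a ∈ B
    swap
    · exact ⟨B, ⟨hBc, hBp, hbB, haB⟩, hmin⟩
    set S := B.erase a with hSdef
    have hBS : insert a S = B := Finset.insert_erase haB
    have haS : a ∉ S := by simp [hSdef]
    have hbS : b ∉ S := fun h => hbB (Finset.mem_of_mem_erase h)
    have hSc : S.card = m - 1 := by rw [hSdef, Finset.card_erase_of_mem haB, hBc]
    obtain ⟨r, hr⟩ := WithTop.ne_top_iff_exists.1 hBp
    have key : ∃ j, j ∉ S ∧ j ≠ a ∧ j ≠ b ∧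
        p (insert j S) + min (d j) (e j) ≤ p B + d a := by
      obtain ⟨j, hjS, hja, hle⟩ := circ_orth n m p hp d hd S hSc a haS hab.ne_top
      rw [hBS] at hle
      by_cases hjb : j = b
      · subst hjb
        obtain ⟨k, hkS, hkb, hle2⟩ := circ_orth n m p hp e he S hSc j hbS hbne
        rw [← hb] at hle2
        have h3 := hle2.trans hle
        refine ⟨k, hkS, ?_, hkb, le_trans ?_ h3⟩
        · rintro rfl
          rw [hBS] at h3
          exact absurd (WithTop.le_of_add_le_add_left hBp h3) (not_le.2 hab)
        · gcongr
          exact min_le_right _ _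
      · refine ⟨j, hjS, hja, hjb, le_trans ?_ hle⟩
        gcongr
        exact min_le_left _ _
    obtain ⟨j, hjS, hja, hjb, hle⟩ := key
    rw [← hr, ← hda, ← WithTop.coe_add] at hle
    have hfin := ne_top_of_le_ne_top WithTop.coe_ne_top hle
    rw [WithTop.add_ne_top] at hfin
    obtain ⟨s, hs⟩ := WithTop.ne_top_iff_exists.1 hfin.1
    obtain ⟨g, hg⟩ := WithTop.ne_top_iff_exists.1 hfin.2
    rw [← hs, ← hg, ← WithTop.coe_add, WithTop.coe_le_coe] at hle
    have hGj : G j = g := by simp only [hG, ← hg, WithTop.untopD_coe]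
    refine ⟨insert j S, ⟨?_, hfin.1, ?_, ?_⟩, ?_⟩
    · rw [Finset.card_insert_of_notMem hjS, hSc]; omega
    · simp [hbS, hjb.symm]
    · simp [haS, hja.symm]
    · intro A h1 h2 h3
      refine le_trans ?_ (hmin A h1 h2 h3)
      rw [← hBS, hqi S j hjS, hqi S a haS, hBS, ← hr, ← hs, hGa, hGj]
      simp only [WithTop.untopD_coe]
      linarith
  obtain ⟨B, ⟨hBc, hBp, hbB, haB⟩, hmin⟩ := hex2
  obtain ⟨r, hr⟩ := WithTop.ne_top_iff_exists.1 hBp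
  refine ⟨fun i => circVec n p (insert a B) i + ((da - r : ℝ) : WithTop ℝ),
    ⟨insert a B, da - r, ?_, ⟨a, ?_⟩, fun i => rfl⟩, ?_, ?_, ?_⟩
  · rw [Finset.card_insert_of_notMem haB, hBc]
  · simp [circVec, Finset.erase_insert haB, hBp]
  · simp [circVec, hbB, hne.symm]
  · simp only [circVec, Finset.mem_insert_self, if_true, Finset.erase_insert haB, ← hr, ← hda,
      ← WithTop.coe_add]
    congr 1
    ring
  · intro i
    by_cases hia : i = a
    · subst hia
      simp only [circVec, Finset.mem_insert_self, if_true, Finset.erase_insert haB, ← hr,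
        ← WithTop.coe_add]
      refine (min_le_left _ _).trans ?_
      rw [← hda, WithTop.coe_le_coe]
      linarith
    by_cases hiB : i ∈ B
    swap
    · simp [circVec, hiB, hia]
    have hiB' : i ∈ insert a B := Finset.mem_insert_of_mem hiB
    simp only [circVec, hiB', if_true]
    by_cases htop : p ((insert a B).erase i) = ⊤
    · simp [htop]
    obtain ⟨s, hs⟩ := WithTop.ne_top_iff_exists.1 htop
    have hE : (insert a B).erase i = insert a (B.erase i) :=
      Finset.erase_insert_of_ne (Ne.symm hia)
    have haE : a ∉ B.erase i := fun h => haB (Finset.mem_of_mem_erase h)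
    have h1 := hmin ((insert a B).erase i)
      (by rw [Finset.card_erase_of_mem hiB', Finset.card_insert_of_notMem haB, hBc]; rfl)
      htop (by simp [hbB, hne.symm])
    have h2 := hqi (B.erase i) i (by simp)
    have h3 := hqi (B.erase i) a haE
    rw [Finset.insert_erase hiB, ← hr] at h2
    rw [← hE, ← hs, hGa] at h3
    rw [h2, h3] at h1
    simp only [WithTop.untopD_coe] at h1
    have h4 := hM B ((insert a B).erase i)
    rw [← hs, ← hr] at h4
    simp only [WithTop.untopD_coe] at h4
    have hfin : min (d i) (e i) ≠ ⊤ := by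
      intro h
      have : G i = M := by simp only [hG, h, WithTop.untopD_top]
      linarith
    obtain ⟨g, hg⟩ := WithTop.ne_top_iff_exists.1 hfin
    have hGi : G i = g := by simp only [hG, ← hg, WithTop.untopD_coe]
    rw [← hs, ← hg, ← WithTop.coe_add, WithTop.coe_le_coe]
    linarith
end

section
/- Let p be a tropical Plücker vector of rank m on {1,…,n}, and let S and T be (m+1)-element subsets of {1,…,n} such that c_S and c_T are not identically ∞ and have equal supports, i.e., {i : (c_S)_i ≠ ∞} = {i : (c_T)_i ≠ ∞}. Then there exists λ ∈ ℝ such that (c_T)_i = (c_S)_i + λ for all i ∈ {1,…,n} (where ∞ + λ = ∞). That is, two circuits of p with the same support differ by a real multiple of the all-ones vector. -/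
open Finset

theorem circ_exchange_le (n m : ℕ)
    (p : Finset (Fin n) → WithTop ℝ) (hp : IsTropPlucker n m p)
    (S T : Finset (Fin n)) (hS : S.card = m + 1) (hT : T.card = m + 1)
    (hsupp : ∀ i : Fin n, circVec n p S i ≠ ⊤ ↔ circVec n p T i ≠ ⊤)
    (a b : Fin n) (hab : a ≠ b) (ha : circVec n p S a ≠ ⊤) (hb : circVec n p S b ≠ ⊤) :
    circVec n p S a + circVec n p T b ≤ circVec n p S b + circVec n p T a := by
  have memS : ∀ i, circVec n p S i ≠ ⊤ → i ∈ S := by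
    intro i hi
    by_contra h
    exact hi (by simp [circVec, h])
  have memT : ∀ i, circVec n p T i ≠ ⊤ → i ∈ T := by
    intro i hi
    by_contra h
    exact hi (by simp [circVec, h])
  have haS := memS a ha
  have hbS := memS b hb
  have haT' := (hsupp a).1 ha
  have haT := memT a haT'
  have hbT := memT b ((hsupp b).1 hb)
  have hcard : ((S.erase a).erase b).card = m - 1 := by
    rw [card_erase_of_mem (by simp [hbS, hab.symm]), card_erase_of_mem haS, hS]
    omega
  have e1 : insert a ((S.erase a).erase b) = S.erase b := by
    rw [erase_right_comm, insert_erase (by simp [haS, hab])]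
  have e2 : insert b ((S.erase a).erase b) = S.erase a := by
    rw [insert_erase (by simp [hbS, hab.symm])]
  obtain ⟨j, hj, hja, hle⟩ := hp _ T hcard hT a (by simp [haT])
  have cSa : circVec n p S a = p (S.erase a) := by simp [circVec, haS]
  have cSb : circVec n p S b = p (S.erase b) := by simp [circVec, hbS]
  have cTa : circVec n p T a = p (T.erase a) := by simp [circVec, haT]
  have cTb : circVec n p T b = p (T.erase b) := by simp [circVec, hbT]
  have hjT : j ∈ T := (mem_sdiff.1 hj).1
  have hjb : j = b := by
    by_contra hjb
    have hlt : p (insert j ((S.erase a).erase b)) + p (T.erase j) ≠ ⊤ := by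
      refine ne_top_of_le_ne_top ?_ hle
      rw [e1, ← cSb, ← cTa]
      exact WithTop.add_ne_top.2 ⟨hb, haT'⟩
    have h2 : circVec n p T j ≠ ⊤ := by
      simpa [circVec, hjT] using (WithTop.add_ne_top.1 hlt).2
    have := memS j ((hsupp j).2 h2)
    exact (mem_sdiff.1 hj).2 (by simp [hja, hjb, this])
  subst hjb
  rw [e1, e2] at hle
  rw [cSa, cSb, cTa, cTb]
  exact hle

/-- Two circuits of a tropical Plücker vector with the same support
differ by a real multiple of the all-ones vector. -/
theorem circuits_same_support (n m : ℕ) (hm : 1 ≤ m) (hmn : m ≤ n)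
    (p : Finset (Fin n) → WithTop ℝ) (hp : IsTropPlucker n m p)
    (S T : Finset (Fin n)) (hS : S.card = m + 1) (hT : T.card = m + 1)
    (hSne : ∃ i, circVec n p S i ≠ ⊤) (hTne : ∃ i, circVec n p T i ≠ ⊤)
    (hsupp : ∀ i : Fin n, circVec n p S i ≠ ⊤ ↔ circVec n p T i ≠ ⊤) :
    ∃ lam : ℝ, ∀ i : Fin n, circVec n p T i = circVec n p S i + (lam : WithTop ℝ) := by
  obtain ⟨a, ha⟩ := hSne
  have haT := (hsupp a).1 ha
  obtain ⟨x, hx⟩ := WithTop.ne_top_iff_exists.1 ha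
  obtain ⟨y, hy⟩ := WithTop.ne_top_iff_exists.1 haT
  refine ⟨y - x, fun i => ?_⟩
  by_cases hi : circVec n p S i = ⊤
  · have hiT : circVec n p T i = ⊤ := by
      by_contra h
      exact (hsupp i).2 h hi
    simp [hi, hiT]
  · have key : circVec n p S a + circVec n p T i = circVec n p S i + circVec n p T a := by
      by_cases hai : a = i
      · subst hai
        rfl
      · exact le_antisymm
          (circ_exchange_le n m p hp S T hS hT hsupp a i hai ha hi)
          (circ_exchange_le n m p hp S T hS hT hsupp i a (Ne.symm hai) hi ha)
    obtain ⟨z, hz⟩ := WithTop.ne_top_iff_exists.1 hi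
    obtain ⟨w, hw⟩ := WithTop.ne_top_iff_exists.1 ((hsupp i).1 hi)
    rw [← hx, ← hy, ← hz, ← hw] at key
    rw [← hz, ← hw]
    norm_cast at key ⊢
    linarith
end

section
/- Let p be a tropical Plücker vector of rank m on {1,…,n}, let B ∈ supp(p), and let v ∈ Σ_B. Then v ∈ L(p) if and only if v is tropically orthogonal to the fundamental circuit c_{B∪{a}} for every a ∈ {1,…,n}∖B. -/
open Finset

lemma exists_max_basis (n m : ℕ)
    (p : Finset (Fin n) → WithTop ℝ)
    (B : Finset (Fin n)) (hB : suppMem n m p B)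
    (v : Fin n → ℝ) (hv : memSigma n m p B v)
    (h : ∀ a : Fin n, a ∉ B →
        TropOrth n (fun i => (v i : WithTop ℝ)) (circVec n p (insert a B))) (a : Fin n) :
    ∃ C : Finset (Fin n), a ∈ C ∧ suppMem n m p C ∧ memSigma n m p C v := by
  by_cases ha : a ∈ B
  · exact ⟨B, ha, hB, hv⟩
  have key : ∃ k, k ≠ a ∧ (v k : WithTop ℝ) + circVec n p (insert a B) k ≤
      (v a : WithTop ℝ) + p B := by
    have hca : circVec n p (insert a B) a = p B := by
      simp [circVec, Finset.erase_insert ha]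
    rcases h a ha with h | ⟨i, j, hij, he, hk⟩
    · have h1 := h a
      rw [hca] at h1
      simp [hB.2] at h1
    · have h1 := hk a
      rw [hca] at h1
      by_cases hi : i = a
      · subst hi
        exact ⟨j, hij.symm, by rw [← he]; exact h1⟩
      · exact ⟨i, hi, h1⟩
  obtain ⟨k, hka, hk⟩ := key
  obtain ⟨b, hb⟩ := WithTop.ne_top_iff_exists.mp hB.2
  have hkB : k ∈ B := by
    by_contra hkB
    simp [circVec, hkB, hka, ← hb] at hk
  have hkc : circVec n p (insert a B) k = p ((insert a B).erase k) := by
    simp [circVec, hkB]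
  rw [hkc, ← hb] at hk
  have hne : p ((insert a B).erase k) ≠ ⊤ := by
    intro ht
    rw [ht] at hk
    simp at hk
  obtain ⟨c, hc⟩ := WithTop.ne_top_iff_exists.mp hne
  rw [← hc] at hk
  norm_cast at hk
  have hsum : ∑ i ∈ (insert a B).erase k, v i + v k = v a + ∑ i ∈ B, v i := by
    rw [Finset.sum_erase_add _ _ (by simp [hkB]), Finset.sum_insert ha]
  refine ⟨(insert a B).erase k, by simp [hka.symm], ⟨?_, hne⟩, ?_⟩
  · rw [Finset.card_erase_of_mem (by simp [hkB]), Finset.card_insert_of_notMem ha, hB.1]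
    rfl
  · intro A hA
    refine (hv A hA).trans ?_
    simp only [wgt, ← hb, ← hc, WithTop.untopD_coe]
    linarith

theorem mem_L_iff_orth_fundamental_circuits (n m : ℕ) (hm : 1 ≤ m) (hmn : m ≤ n)
    (p : Finset (Fin n) → WithTop ℝ) (hp : IsTropPlucker n m p)
    (B : Finset (Fin n)) (hB : suppMem n m p B)
    (v : Fin n → ℝ) (hv : memSigma n m p B v) :
    memL n m p (fun i => (v i : WithTop ℝ)) ↔
      ∀ a : Fin n, a ∉ B →
        TropOrth n (fun i => (v i : WithTop ℝ)) (circVec n p (insert a B)) := by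
  constructor
  · intro h a ha
    exact h _ (by rw [Finset.card_insert_of_notMem ha, hB.1])
  intro h S hS
  have hSne : S.Nonempty := Finset.card_pos.mp (by omega)
  obtain ⟨i, hiS, hmin⟩ := Finset.exists_min_image S
    (fun i => (v i : WithTop ℝ) + circVec n p S i) hSne
  have hmin' : ∀ k, (v i : WithTop ℝ) + circVec n p S i ≤ (v k : WithTop ℝ) + circVec n p S k := by
    intro k
    by_cases hk : k ∈ S
    · exact hmin k hk
    · simp [circVec, hk]
  by_cases htop : (v i : WithTop ℝ) + circVec n p S i = ⊤
  · left
    intro k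
    have := hmin' k
    rw [htop] at this
    exact top_le_iff.mp this
  right
  obtain ⟨C, hiC, hC, hCv⟩ := exists_max_basis n m p B hB v hv h i
  have hciS : circVec n p S i = p (S.erase i) := by simp [circVec, hiS]
  obtain ⟨j, hj, hji, hle⟩ := hp (C.erase i) S
    (by rw [Finset.card_erase_of_mem hiC, hC.1]) hS i (by simp [hiS])
  obtain ⟨hjS, hjC⟩ := Finset.mem_sdiff.mp hj
  have hcjS : circVec n p S j = p (S.erase j) := by simp [circVec, hjS]
  have hSi : p (S.erase i) ≠ ⊤ := by
    intro ht
    rw [hciS, ht] at htop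
    simp at htop
  refine ⟨i, j, hji.symm, le_antisymm (hmin' j) ?_, hmin'⟩
  show (v j : WithTop ℝ) + circVec n p S j ≤ (v i : WithTop ℝ) + circVec n p S i
  rw [hciS, hcjS]
  rw [Finset.insert_erase hiC] at hle
  obtain ⟨c, hc⟩ := WithTop.ne_top_iff_exists.mp hC.2
  obtain ⟨s, hs⟩ := WithTop.ne_top_iff_exists.mp hSi
  have hfin : p (insert j (C.erase i)) + p (S.erase j) ≠ ⊤ := by
    intro ht
    rw [ht, ← hc, ← hs, top_le_iff] at hle
    exact WithTop.coe_ne_top hle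
  obtain ⟨h1, h2⟩ := WithTop.add_ne_top.mp hfin
  obtain ⟨d, hd⟩ := WithTop.ne_top_iff_exists.mp h1
  obtain ⟨t, ht⟩ := WithTop.ne_top_iff_exists.mp h2
  have hw := hCv (insert j (C.erase i)) ⟨by
    rw [Finset.card_insert_of_notMem hjC, Finset.card_erase_of_mem hiC, hC.1]; omega, h1⟩
  have hsum : ∑ x ∈ insert j (C.erase i), v x + v i = v j + ∑ x ∈ C, v x := by
    rw [Finset.sum_insert hjC, add_assoc, Finset.sum_erase_add _ _ hiC]
  simp only [wgt, ← hc, ← hd, WithTop.untopD_coe] at hw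
  rw [← hc, ← hs, ← hd, ← ht] at hle
  rw [← hs, ← ht]
  norm_cast at hle ⊢
  linarith
end

section
/- Let p be a tropical Plücker vector of rank m on {1,…,n} with supp(p) nonempty, and let v ∈ ℝⁿ. Then v ∈ L(p) if and only if the matroid M_v of maximal v-weight bases is loopless; explicitly, v ∈ L(p) if and only if for every i ∈ {1,…,n} there exists B ∈ supp(p) with i ∈ B such that w_p(v,B) ≥ w_p(v,A) for every A ∈ supp(p). -/
open Finset

/-- A real vector `v` lies in `L(p)` iff the matroid `M_v` of bases of
maximal `v`-weight is loopless, i.e. every `i` lies in some basis of maximal `v`-weight. -/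
theorem mem_L_iff_loopless (n m : ℕ) (hm : 1 ≤ m) (hmn : m ≤ n)
    (p : Finset (Fin n) → WithTop ℝ) (hp : IsTropPlucker n m p)
    (hne : ∃ B, suppMem n m p B) (v : Fin n → ℝ) :
    memL n m p (fun i => (v i : WithTop ℝ)) ↔
      ∀ i : Fin n, ∃ B : Finset (Fin n), suppMem n m p B ∧ i ∈ B ∧
        ∀ A, suppMem n m p A → wgt n p v A ≤ wgt n p v B := by
  classical
  constructor
  · intro h i
    obtain ⟨B, hB, hmax⟩ : ∃ B, suppMem n m p B ∧
        ∀ A, suppMem n m p A → wgt n p v A ≤ wgt n p v B := by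
      obtain ⟨B0, hB0⟩ := hne
      obtain ⟨B, hB, hmax⟩ := Finset.exists_max_image
        (Finset.univ.filter fun B => suppMem n m p B) (wgt n p v) ⟨B0, by simpa using hB0⟩
      exact ⟨B, by simpa using hB, fun A hA => hmax A (by simpa using hA)⟩
    by_cases hi : i ∈ B
    · exact ⟨B, hB, hi, hmax⟩
    obtain ⟨hBc, hBt⟩ := hB
    obtain ⟨b, hb⟩ := WithTop.ne_top_iff_exists.mp hBt
    have key : ∃ j, j ≠ i ∧ (v j : WithTop ℝ) + circVec n p (insert i B) j
        ≤ (v i : WithTop ℝ) + p B := by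
      have hci : circVec n p (insert i B) i = p B := by
        simp [circVec, Finset.erase_insert hi]
      rcases h (insert i B) (by rw [Finset.card_insert_of_notMem hi, hBc]) with h1 | ⟨j, k, hjk, he, hle⟩
      · have := h1 i
        rw [hci, ← hb] at this
        exact absurd this (by exact_mod_cast WithTop.coe_ne_top)
      · have h2 := hle i
        rw [hci] at h2
        by_cases hji : j = i
        · exact ⟨k, fun hk => hjk (hji.trans hk.symm), he ▸ h2⟩
        · exact ⟨j, hji, h2⟩
    obtain ⟨j, hji, hj⟩ := key
    rw [← hb] at hj
    have hjB : j ∈ B := by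
      by_contra hjB
      have : circVec n p (insert i B) j = ⊤ := by simp [circVec, hji, hjB]
      rw [this, WithTop.add_top, top_le_iff] at hj
      exact absurd hj (by exact_mod_cast WithTop.coe_ne_top)
    have hcj : circVec n p (insert i B) j = p ((insert i B).erase j) := by
      simp [circVec, hjB]
    rw [hcj] at hj
    have hct : p ((insert i B).erase j) ≠ ⊤ := by
      intro ht
      rw [ht, WithTop.add_top, top_le_iff] at hj
      exact absurd hj (by exact_mod_cast WithTop.coe_ne_top)
    obtain ⟨c, hc⟩ := WithTop.ne_top_iff_exists.mp hct
    rw [← hc] at hj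
    have hj' : v j + c ≤ v i + b := by exact_mod_cast hj
    refine ⟨(insert i B).erase j, ⟨?_, hct⟩, ?_, fun A hA => (hmax A hA).trans ?_⟩
    · rw [Finset.card_erase_of_mem (by simp [hjB]), Finset.card_insert_of_notMem hi, hBc]; simp
    · simp [Ne.symm hji]
    · have h1 := Finset.add_sum_erase (insert i B) v (a := j) (by simp [hjB])
      rw [Finset.sum_insert hi] at h1
      simp only [wgt, ← hb, ← hc, WithTop.untopD_coe]
      linarith
  · intro h S hS
    obtain ⟨i, -, hi⟩ := Finset.exists_min_image (Finset.univ : Finset (Fin n))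
      (fun k => (v k : WithTop ℝ) + circVec n p S k) ⟨⟨0, by omega⟩, Finset.mem_univ _⟩
    by_cases hit : (v i : WithTop ℝ) + circVec n p S i = ⊤
    · left
      intro k
      have := hi k (Finset.mem_univ _)
      rw [hit] at this
      exact top_le_iff.mp this
    right
    have hiS : i ∈ S := by
      by_contra hiS
      exact hit (by simp [circVec, hiS])
    have hci : circVec n p S i = p (S.erase i) := by simp [circVec, hiS]
    have hat : p (S.erase i) ≠ ⊤ := by
      intro ht
      exact hit (by rw [hci, ht, WithTop.add_top])
    obtain ⟨a, ha⟩ := WithTop.ne_top_iff_exists.mp hat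
    obtain ⟨B, ⟨hBc, hBt⟩, hiB, hmax⟩ := h i
    obtain ⟨b, hb⟩ := WithTop.ne_top_iff_exists.mp hBt
    obtain ⟨j, hj, hji, hle⟩ := hp (B.erase i) S (by rw [Finset.card_erase_of_mem hiB, hBc]) hS i
      (by simp [hiS])
    rw [Finset.insert_erase hiB, ← ha, ← hb] at hle
    have hjS : j ∈ S := (Finset.mem_sdiff.mp hj).1
    have hjB : j ∉ B.erase i := (Finset.mem_sdiff.mp hj).2
    have hlt := lt_of_le_of_lt hle (by exact_mod_cast WithTop.coe_lt_top (b + a))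
    rw [WithTop.add_lt_top] at hlt
    obtain ⟨c, hc⟩ := WithTop.ne_top_iff_exists.mp hlt.1.ne
    obtain ⟨d, hd⟩ := WithTop.ne_top_iff_exists.mp hlt.2.ne
    rw [← hc, ← hd] at hle
    have hle' : c + d ≤ b + a := by exact_mod_cast hle
    have hw := hmax (insert j (B.erase i)) ⟨by
      rw [Finset.card_insert_of_notMem hjB, Finset.card_erase_of_mem hiB, hBc]; omega, hlt.1.ne⟩
    have h1 := Finset.add_sum_erase B v hiB
    simp only [wgt, ← hb, ← hc, WithTop.untopD_coe, Finset.sum_insert hjB] at hw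
    have hcj : circVec n p S j = p (S.erase j) := by simp [circVec, hjS]
    refine ⟨i, j, hji.symm, le_antisymm (hi j (Finset.mem_univ _)) ?_,
      fun k => hi k (Finset.mem_univ _)⟩
    rw [hci, hcj, ← ha, ← hd]
    have : v j + d ≤ v i + a := by linarith
    beta_reduce
    exact_mod_cast this
end

section
/- Let p be a tropical Plücker vector of rank m on {1,…,n}, let B ∈ supp(p), and assume that for every i ∉ B there exists b ∈ B with (B∪{i})∖{b} ∈ supp(p). Then the map f_B : ℝ^B → ℝⁿ is a piecewise linear homeomorphism between ℝ^B ≅ ℝ^m and the local tropical linear space L(p)_B (with the subspace topology from ℝⁿ): f_B is continuous and injective, its range is exactly L(p)_B, and the induced map from ℝ^B to L(p)_B is a homeomorphism, with continuous inverse given by restricting a vector v ∈ L(p)_B to its coordinates indexed by B. -/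
open Finset

noncomputable def qv (n : ℕ) (p : Finset (Fin n) → WithTop ℝ) (v : Fin n → ℝ)
    (A : Finset (Fin n)) : WithTop ℝ := p A + ((-∑ i ∈ A, v i : ℝ) : WithTop ℝ)

lemma wt_cancel {a b c : WithTop ℝ} (hc : c ≠ ⊤) (h : c + a ≤ c + b) : a ≤ b := by
  exact (WithTop.add_le_add_iff_left hc).1 h

lemma qv_ne_top {n : ℕ} {p : Finset (Fin n) → WithTop ℝ} {v : Fin n → ℝ}
    {A : Finset (Fin n)} (h : p A ≠ ⊤) : qv n p v A ≠ ⊤ := by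
  unfold qv
  exact WithTop.add_ne_top.2 ⟨h, WithTop.coe_ne_top⟩

lemma qv_erase {n : ℕ} (p : Finset (Fin n) → WithTop ℝ) (v : Fin n → ℝ)
    {S : Finset (Fin n)} {j : Fin n} (hj : j ∈ S) :
    qv n p v (S.erase j) + ((∑ i ∈ S, v i : ℝ) : WithTop ℝ) = (v j : WithTop ℝ) + p (S.erase j) := by
  unfold qv
  rw [add_assoc, ← WithTop.coe_add, ← Finset.add_sum_erase S v hj, add_comm]
  congr 2
  ring

lemma qv_plucker {n m : ℕ} {p : Finset (Fin n) → WithTop ℝ} (hp : IsTropPlucker n m p)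
    (v : Fin n → ℝ) : IsTropPlucker n m (qv n p v) := by
  intro S T hS hT i hi
  obtain ⟨j, hj, hji, h⟩ := hp S T hS hT i hi
  refine ⟨j, hj, hji, ?_⟩
  have key : ∀ k ∈ T \ S, qv n p v (insert k S) + qv n p v (T.erase k)
      = (p (insert k S) + p (T.erase k)) +
        ((-(∑ i ∈ S, v i) - ∑ i ∈ T, v i : ℝ) : WithTop ℝ) := by
    intro k hk
    rw [Finset.mem_sdiff] at hk
    unfold qv
    rw [add_add_add_comm, ← WithTop.coe_add, Finset.sum_insert hk.2,
      ← Finset.add_sum_erase T v hk.1]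
    congr 2
    ring
  rw [key i hi, key j hj]
  gcongr

lemma local_global {n m : ℕ} (hm : 1 ≤ m) {q : Finset (Fin n) → WithTop ℝ}
    (hq : IsTropPlucker n m q) {B : Finset (Fin n)} (hB : B.card = m) (hBt : q B ≠ ⊤)
    (hloc : ∀ i, i ∉ B → ∀ b ∈ B, q B ≤ q ((insert i B).erase b)) :
    ∀ k : ℕ, ∀ A : Finset (Fin n), A.card = m → (A \ B).card = k → q B ≤ q A := by
  intro k
  induction k with
  | zero =>
    intro A hA h
    have h1 : A ⊆ B := by
      rw [Finset.card_eq_zero] at h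
      exact Finset.sdiff_eq_empty_iff_subset.1 h
    rw [Finset.eq_of_subset_of_card_le h1 (by omega)]
  | succ k ih =>
    intro A hA h
    obtain ⟨i, hi⟩ : (A \ B).Nonempty := Finset.card_pos.1 (by omega)
    have hi' := Finset.mem_sdiff.1 hi
    obtain ⟨j, hj, hji, hle⟩ := hq (A.erase i) (insert i B)
      (by rw [Finset.card_erase_of_mem hi'.1, hA])
      (by rw [Finset.card_insert_of_notMem hi'.2, hB]) i (by simp)
    have hjB : j ∈ B := by
      have := (Finset.mem_sdiff.1 hj).1
      exact (Finset.mem_insert.1 this).resolve_left hji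
    have hjA : j ∉ A := by
      have := (Finset.mem_sdiff.1 hj).2
      intro h'
      exact this (Finset.mem_erase.2 ⟨hji, h'⟩)
    rw [Finset.insert_erase hi'.1, Finset.erase_insert hi'.2] at hle
    have h2 : q B ≤ q (insert j (A.erase i)) := by
      apply ih
      · rw [Finset.card_insert_of_notMem (fun h' => hjA (Finset.mem_of_mem_erase h')),
          Finset.card_erase_of_mem hi'.1, hA]
        omega
      · have : insert j (A.erase i) \ B = (A \ B).erase i := by
          ext a
          simp only [Finset.mem_sdiff, Finset.mem_insert, Finset.mem_erase]
          constructor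
          · rintro ⟨h1 | h1, h2⟩
            · exact absurd (h1 ▸ hjB) h2
            · exact ⟨h1.1, h1.2, h2⟩
          · rintro ⟨h1, h2, h3⟩
            exact ⟨Or.inr ⟨h1, h2⟩, h3⟩
        rw [this, Finset.card_erase_of_mem hi, h]
        omega
    refine h2.trans (wt_cancel hBt ?_)
    calc q B + q (insert j (A.erase i)) ≤ q ((insert i B).erase j) + q (insert j (A.erase i)) := by
          gcongr
          exact hloc i hi'.2 j hjB
      _ ≤ q A + q B := by rw [add_comm]; exact hle
      _ = q B + q A := add_comm _ _

lemma two_min {n m : ℕ} {q : Finset (Fin n) → WithTop ℝ}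
    (hq : IsTropPlucker n m q) {B : Finset (Fin n)} (hB : B.card = m) (hBt : q B ≠ ⊤)
    (hglob : ∀ A : Finset (Fin n), A.card = m → q B ≤ q A)
    (hex : ∀ i, i ∉ B → ∃ b ∈ B, q ((insert i B).erase b) = q B)
    (S : Finset (Fin n)) (hS : S.card = m + 1) (i : Fin n) (hi : i ∈ S) :
    ∃ j ∈ S, j ≠ i ∧ q (S.erase j) ≤ q (S.erase i) := by
  obtain ⟨b, hb, hiS, hqb⟩ : ∃ b ∈ B, i ∉ B.erase b ∧ q (insert i (B.erase b)) = q B := by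
    by_cases hiB : i ∈ B
    · exact ⟨i, hiB, by simp, by rw [Finset.insert_erase hiB]⟩
    · obtain ⟨b, hb, h⟩ := hex i hiB
      refine ⟨b, hb, fun h' => hiB (Finset.mem_of_mem_erase h'), ?_⟩
      rwa [Finset.erase_insert_of_ne (by rintro rfl; exact hiB hb)] at h
  obtain ⟨j, hj, hji, hle⟩ := hq (B.erase b) S (by rw [Finset.card_erase_of_mem hb, hB]) hS i
    (Finset.mem_sdiff.2 ⟨hi, hiS⟩)
  rw [Finset.mem_sdiff] at hj
  refine ⟨j, hj.1, hji, wt_cancel hBt ?_⟩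
  rw [hqb] at hle
  refine le_trans ?_ hle
  gcongr
  apply hglob
  rw [Finset.card_insert_of_notMem hj.2, Finset.card_erase_of_mem hb, hB]
  have := Finset.card_pos.2 ⟨b, hb⟩
  omega

lemma qv_swap {n : ℕ} {p : Finset (Fin n) → WithTop ℝ} {v : Fin n → ℝ}
    {B : Finset (Fin n)} {i b : Fin n} (hi : i ∉ B) (hb : b ∈ B) :
    (qv n p v B ≤ qv n p v ((insert i B).erase b) ↔
      (v i : WithTop ℝ) + p B ≤ (v b : WithTop ℝ) + p ((insert i B).erase b)) ∧
    (qv n p v ((insert i B).erase b) ≤ qv n p v B ↔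
      (v b : WithTop ℝ) + p ((insert i B).erase b) ≤ (v i : WithTop ℝ) + p B) := by
  have h1 := qv_erase p v (Finset.mem_insert_self i B)
  rw [Finset.erase_insert hi] at h1
  have h2 := qv_erase p v (Finset.mem_insert_of_mem (a := b) (b := i) hb)
  rw [← h1, ← h2]
  exact ⟨(WithTop.add_le_add_iff_right WithTop.coe_ne_top).symm,
    (WithTop.add_le_add_iff_right WithTop.coe_ne_top).symm⟩

lemma fB_mem {n : ℕ} {p : Finset (Fin n) → WithTop ℝ} {B : Finset (Fin n)}
    (x : {i : Fin n // i ∈ B} → ℝ) {i : Fin n} (h : i ∈ B) : fB n p B x i = x ⟨i, h⟩ := by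
  simp [fB, h]

lemma fB_spec {n m : ℕ} {p : Finset (Fin n) → WithTop ℝ} {B : Finset (Fin n)}
    (hBt : p B ≠ ⊤)
    (hcov : ∀ i : Fin n, i ∉ B → ∃ b ∈ B, suppMem n m p ((insert i B).erase b))
    (x : {i : Fin n // i ∈ B} → ℝ) {i : Fin n} (hi : i ∉ B) :
    (∀ b : {i : Fin n // i ∈ B},
      (fB n p B x i : WithTop ℝ) + p B ≤ (x b : WithTop ℝ) + p ((insert i B).erase b.1)) ∧
    ∃ b : {i : Fin n // i ∈ B},
      (fB n p B x i : WithTop ℝ) + p B = (x b : WithTop ℝ) + p ((insert i B).erase b.1) := by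
  obtain ⟨b0, hb0, hs⟩ := hcov i hi
  set f : {i : Fin n // i ∈ B} → WithTop ℝ :=
    fun b => (x b : WithTop ℝ) + p ((insert i B).erase b.1) with hf
  obtain ⟨b1, -, hb1⟩ := Finset.exists_mem_eq_inf B.attach ⟨⟨b0, hb0⟩, by simp⟩ f
  have hle : ∀ b, B.attach.inf f ≤ f b := fun b => Finset.inf_le (by simp)
  have hne : B.attach.inf f ≠ ⊤ := by
    intro h
    have := hle ⟨b0, hb0⟩
    rw [h, top_le_iff] at this
    exact WithTop.add_ne_top.2 ⟨WithTop.coe_ne_top, hs.2⟩ this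
  have hval : (fB n p B x i : WithTop ℝ) + p B = B.attach.inf f := by
    have h0 : fB n p B x i = (B.attach.inf f).untopD 0 - (p B).untopD 0 := by
      simp [fB, hi, hf]
    rw [h0]
    lift B.attach.inf f to ℝ using hne with t
    lift p B to ℝ using hBt with r
    simp only [WithTop.untopD_coe]
    rw [← WithTop.coe_add]
    congr 1
    ring
  rw [hval]
  exact ⟨hle, b1, hb1⟩

lemma fB_uniq {n m : ℕ} {p : Finset (Fin n) → WithTop ℝ} {B : Finset (Fin n)}
    (hBt : p B ≠ ⊤)
    (hcov : ∀ i : Fin n, i ∉ B → ∃ b ∈ B, suppMem n m p ((insert i B).erase b))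
    (x : {i : Fin n // i ∈ B} → ℝ) {i : Fin n} (hi : i ∉ B) (c : ℝ)
    (h1 : ∀ b : {i : Fin n // i ∈ B},
      (c : WithTop ℝ) + p B ≤ (x b : WithTop ℝ) + p ((insert i B).erase b.1))
    (h2 : ∃ b : {i : Fin n // i ∈ B},
      (x b : WithTop ℝ) + p ((insert i B).erase b.1) ≤ (c : WithTop ℝ) + p B) :
    fB n p B x i = c := by
  obtain ⟨h3, b, hb⟩ := fB_spec hBt hcov x hi
  obtain ⟨b', hb'⟩ := h2
  apply le_antisymm
  · exact WithTop.coe_le_coe.1 ((WithTop.add_le_add_iff_right hBt).1 ((h3 b').trans hb'))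
  · exact WithTop.coe_le_coe.1 ((WithTop.add_le_add_iff_right hBt).1 (hb ▸ h1 b))

lemma fB_cont {n m : ℕ} {p : Finset (Fin n) → WithTop ℝ} {B : Finset (Fin n)}
    (hBt : p B ≠ ⊤)
    (hcov : ∀ i : Fin n, i ∉ B → ∃ b ∈ B, suppMem n m p ((insert i B).erase b)) :
    Continuous (fB n p B) := by
  classical
  refine continuous_pi fun i => ?_
  by_cases hi : i ∈ B
  · have : (fun x => fB n p B x i) = fun x => x ⟨i, hi⟩ := funext fun x => fB_mem x hi
    rw [this]
    fun_prop
  · set F : Finset {i : Fin n // i ∈ B} :=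
      B.attach.filter (fun b => p ((insert i B).erase b.1) ≠ ⊤) with hF
    have hne : F.Nonempty := by
      obtain ⟨b, hb, h⟩ := hcov i hi
      exact ⟨⟨b, hb⟩, by simp [hF, h.2]⟩
    have : (fun x => fB n p B x i) = fun x => F.inf' hne (fun b => x b +
        ((p ((insert i B).erase b.1)).untopD 0 - (p B).untopD 0)) := by
      funext x
      have conv : ∀ b ∈ F, ((x b : WithTop ℝ) + p ((insert i B).erase b.1)) =
          ((x b + ((p ((insert i B).erase b.1)).untopD 0 - (p B).untopD 0) : ℝ) : WithTop ℝ)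
            + p B := by
        intro b hb
        have hb' := (Finset.mem_filter.1 hb).2
        lift p ((insert i B).erase b.1) to ℝ using hb' with t
        lift p B to ℝ using hBt with r
        simp only [WithTop.untopD_coe]
        rw [← WithTop.coe_add, ← WithTop.coe_add]
        congr 1
        ring
      apply fB_uniq hBt hcov x hi
      · intro b
        by_cases hb : b ∈ F
        · rw [conv b hb]
          gcongr
          exact WithTop.coe_le_coe.2 (Finset.inf'_le (fun b : {i : Fin n // i ∈ B} => x b +
            ((p ((insert i B).erase b.1)).untopD 0 - (p B).untopD 0)) hb)
        · have : p ((insert i B).erase b.1) = ⊤ := by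
            by_contra h
            exact hb (Finset.mem_filter.2 ⟨by simp, h⟩)
          rw [this]
          simp
      · obtain ⟨b, hb, h⟩ := Finset.exists_mem_eq_inf' hne (fun b => x b +
          ((p ((insert i B).erase b.1)).untopD 0 - (p B).untopD 0))
        exact ⟨b, by rw [conv b hb, h]⟩
    rw [this]
    exact Continuous.finset_inf'_apply hne fun b _ => by fun_prop

lemma card_swap {n m : ℕ} {B : Finset (Fin n)} (hB : B.card = m) {i b : Fin n} (hi : i ∉ B)
    (hb : b ∈ B) : ((insert i B).erase b).card = m := by
  rw [Finset.card_erase_of_mem (Finset.mem_insert_of_mem hb), Finset.card_insert_of_notMem hi, hB]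
  omega

lemma wgt_iff {n : ℕ} {p : Finset (Fin n) → WithTop ℝ} {v : Fin n → ℝ} {A B : Finset (Fin n)}
    (hA : p A ≠ ⊤) (hB : p B ≠ ⊤) : wgt n p v A ≤ wgt n p v B ↔ qv n p v B ≤ qv n p v A := by
  unfold wgt qv
  lift p A to ℝ using hA with a
  lift p B to ℝ using hB with b
  simp only [WithTop.untopD_coe]
  rw [← WithTop.coe_add, ← WithTop.coe_add, WithTop.coe_le_coe]
  constructor <;> intro h <;> linarith

lemma fB_local {n m : ℕ} (hm : 1 ≤ m) {p : Finset (Fin n) → WithTop ℝ}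
    (hp : IsTropPlucker n m p) {B : Finset (Fin n)} (hB : suppMem n m p B)
    (hcov : ∀ i : Fin n, i ∉ B → ∃ b ∈ B, suppMem n m p ((insert i B).erase b))
    (x : {i : Fin n // i ∈ B} → ℝ) : memLocal n m p B (fB n p B x) := by
  set v := fB n p B x with hv
  have hq := qv_plucker hp v
  have hqB : qv n p v B ≠ ⊤ := qv_ne_top hB.2
  have hvb : ∀ b : {i : Fin n // i ∈ B}, v b.1 = x b := fun b => fB_mem x b.2
  have hloc : ∀ i, i ∉ B → ∀ b ∈ B, qv n p v B ≤ qv n p v ((insert i B).erase b) := by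
    intro i hi b hb
    rw [(qv_swap hi hb).1]
    have := (fB_spec hB.2 hcov x hi).1 ⟨b, hb⟩
    rwa [← hvb] at this
  have hglob : ∀ A : Finset (Fin n), A.card = m → qv n p v B ≤ qv n p v A := fun A hA =>
    local_global hm hq hB.1 hqB hloc _ A hA rfl
  have hex : ∀ i, i ∉ B → ∃ b ∈ B, qv n p v ((insert i B).erase b) = qv n p v B := by
    intro i hi
    obtain ⟨b, hb⟩ := (fB_spec hB.2 hcov x hi).2
    refine ⟨b.1, b.2, le_antisymm ?_ (hloc i hi b.1 b.2)⟩
    rw [(qv_swap hi b.2).2, hvb]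
    exact hb.ge
  refine ⟨fun A hA => (wgt_iff hA.2 hB.2).2 (hglob A hA.1), fun S hS => ?_⟩
  by_cases hall : ∀ k, (v k : WithTop ℝ) + circVec n p S k = ⊤
  · exact Or.inl hall
  right
  push Not at hall
  obtain ⟨k, hk⟩ := hall
  obtain ⟨i, -, hi⟩ := Finset.exists_min_image Finset.univ
    (fun k => (v k : WithTop ℝ) + circVec n p S k) ⟨k, Finset.mem_univ k⟩
  have hiS : i ∈ S := by
    by_contra h
    have := hi k (Finset.mem_univ k)
    simp only [circVec, h, if_false, WithTop.add_top, top_le_iff] at this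
    exact hk (by simpa [circVec] using this)
  obtain ⟨j, hjS, hji, hle⟩ := two_min hq hB.1 hqB hglob hex S hS i hiS
  refine ⟨i, j, hji.symm, le_antisymm (hi j (Finset.mem_univ j)) ?_, fun k => hi k (Finset.mem_univ k)⟩
  simp only [circVec, hiS, hjS, if_true]
  rw [← qv_erase p v hiS, ← qv_erase p v hjS]
  gcongr

lemma local_fB {n m : ℕ} {p : Finset (Fin n) → WithTop ℝ}
    {B : Finset (Fin n)} (hB : suppMem n m p B)
    (hcov : ∀ i : Fin n, i ∉ B → ∃ b ∈ B, suppMem n m p ((insert i B).erase b))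
    {v : Fin n → ℝ} (hv : memLocal n m p B v) : fB n p B (fun b => v b.1) = v := by
  funext i
  by_cases hi : i ∈ B
  · rw [fB_mem _ hi]
  have h1 : ∀ b : {i : Fin n // i ∈ B},
      (v i : WithTop ℝ) + p B ≤ (v b.1 : WithTop ℝ) + p ((insert i B).erase b.1) := by
    intro b
    by_cases ht : p ((insert i B).erase b.1) = ⊤
    · rw [ht]; simp
    rw [← (qv_swap hi b.2).1, ← wgt_iff ht hB.2]
    exact hv.1 _ ⟨card_swap hB.1 hi b.2, ht⟩
  refine fB_uniq hB.2 hcov _ hi _ h1 ?_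
  have hci : circVec n p (insert i B) i = p B := by
    simp [circVec, Finset.erase_insert hi]
  have hnt : (v i : WithTop ℝ) + circVec n p (insert i B) i ≠ ⊤ := by
    rw [hci]; exact WithTop.add_ne_top.2 ⟨WithTop.coe_ne_top, hB.2⟩
  -- any index other than `i` attaining the minimum lies in `B`
  have fin : ∀ j, j ≠ i → (v j : WithTop ℝ) + circVec n p (insert i B) j ≤
      (v i : WithTop ℝ) + circVec n p (insert i B) i →
      ∃ b : {i : Fin n // i ∈ B}, (v b.1 : WithTop ℝ) + p ((insert i B).erase b.1) ≤
        (v i : WithTop ℝ) + p B := by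
    intro j hji hle
    by_cases hj : j ∈ B
    · refine ⟨⟨j, hj⟩, ?_⟩
      rw [hci] at hle
      simpa [circVec, hj] using hle
    · exfalso
      apply hnt
      rw [← top_le_iff]
      refine le_trans ?_ hle
      simp [circVec, hj, hji]
  rcases hv.2 (insert i B) (by rw [Finset.card_insert_of_notMem hi, hB.1]) with h | ⟨j, k, hjk, he, hmin⟩
  · exact absurd (h i) hnt
  · by_cases hji : j = i
    · exact fin k (fun h => hjk (hji.trans h.symm)) (he ▸ hmin i)
    · exact fin j hji (hmin i)

/-- `f_B` is a piecewise linear homeomorphism from `ℝ^B ≅ ℝ^m` onto the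
local tropical linear space `L(p)_B`, with inverse given by restriction of coordinates. -/
theorem local_tropical_linear_space_homeomorph (n m : ℕ) (hm : 1 ≤ m) (hmn : m ≤ n)
    (p : Finset (Fin n) → WithTop ℝ) (hp : IsTropPlucker n m p)
    (B : Finset (Fin n)) (hB : suppMem n m p B)
    (hcov : ∀ i : Fin n, i ∉ B → ∃ b ∈ B, suppMem n m p ((insert i B).erase b)) :
    Continuous (fB n p B) ∧ Function.Injective (fB n p B) ∧
    Set.range (fB n p B) = {v : Fin n → ℝ | memLocal n m p B v} ∧
    ∃ φ : ({i : Fin n // i ∈ B} → ℝ) ≃ₜ {v : Fin n → ℝ // memLocal n m p B v},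
      (∀ x, (φ x : Fin n → ℝ) = fB n p B x) ∧
      (∀ v, φ.symm v = fun b : {i : Fin n // i ∈ B} => (v : Fin n → ℝ) b.1) := by
  have hc := fB_cont hB.2 hcov
  have hres : ∀ x, (fun b : {i : Fin n // i ∈ B} => fB n p B x b.1) = x := fun x =>
    funext fun b => fB_mem x b.2
  refine ⟨hc, fun x y h => ?_, ?_, ?_⟩
  · rw [← hres x, ← hres y, h]
  · ext v
    constructor
    · rintro ⟨x, rfl⟩
      exact fB_local hm hp hB hcov x
    · intro hv
      exact ⟨_, local_fB hB hcov hv⟩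
  · refine ⟨{ toFun := fun x => ⟨fB n p B x, fB_local hm hp hB hcov x⟩
              invFun := fun v b => v.1 b.1
              left_inv := hres
              right_inv := fun v => Subtype.ext (local_fB hB hcov v.2)
              continuous_toFun := hc.subtype_mk _
              continuous_invFun := continuous_pi fun b =>
                (continuous_apply b.1).comp continuous_subtype_val }, fun x => rfl, fun v => rfl⟩
end

section
/- Let p be a tropical Plücker vector of rank m on {1,…,n}, let B ∈ supp(p), and assume that for every i ∉ B there exists b ∈ B with (B∪{i})∖{b} ∈ supp(p). Then for every x ∈ ℝ^B the vector f_B(x) lies in Σ_B; that is, w_p(f_B(x), A) ≤ w_p(f_B(x), B) for every A ∈ supp(p). -/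
open Finset

/-- A neighbour of `B` has `f_B(x)`-weight at most that of `B`, in coordinate form. -/
lemma fB_le_aux (n : ℕ) (p : Finset (Fin n) → WithTop ℝ) (B : Finset (Fin n))
    (x : {i : Fin n // i ∈ B} → ℝ) (i j : Fin n) (hi : i ∉ B) (hj : j ∈ B) (r : ℝ)
    (hr : p ((insert i B).erase j) = (r : WithTop ℝ)) :
    fB n p B x i ≤ fB n p B x j + r - (p B).untopD 0 := by
  have h1 : (B.attach.inf fun b => (x b : WithTop ℝ) + p ((insert i B).erase b.1))
      ≤ ((x ⟨j, hj⟩ + r : ℝ) : WithTop ℝ) := by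
    refine (Finset.inf_le (Finset.mem_attach B ⟨j, hj⟩)).trans ?_
    simp only [hr]
    exact le_of_eq (WithTop.coe_add _ _).symm
  simp only [fB, hi, hj, dif_pos, dif_neg, not_false_eq_true]
  generalize (B.attach.inf fun b => (x b : WithTop ℝ) + p ((insert i B).erase b.1)) = I at h1
  have hI : I ≠ ⊤ := ne_top_of_le_ne_top WithTop.coe_ne_top h1
  lift I to ℝ using hI
  have h2 : I ≤ x ⟨j, hj⟩ + r := by exact_mod_cast h1
  simp only [WithTop.untopD_coe]
  linarith

/-- The image of `f_B` lies in `Σ_B`: the basis `B` has maximal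
`f_B(x)`-weight among all bases of the underlying matroid. -/
theorem fB_mem_Sigma (n m : ℕ) (hm : 1 ≤ m) (hmn : m ≤ n)
    (p : Finset (Fin n) → WithTop ℝ) (hp : IsTropPlucker n m p)
    (B : Finset (Fin n)) (hB : suppMem n m p B)
    (hcov : ∀ i : Fin n, i ∉ B → ∃ b ∈ B, suppMem n m p ((insert i B).erase b)) :
    ∀ x : {i : Fin n // i ∈ B} → ℝ, memSigma n m p B (fB n p B x) := by
  intro x
  suffices H : ∀ k : ℕ, ∀ A : Finset (Fin n), suppMem n m p A → (A \ B).card = k →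
      wgt n p (fB n p B x) A ≤ wgt n p (fB n p B x) B from fun A hA => H _ A hA rfl
  intro k
  induction k with
  | zero =>
    intro A hA hk
    have hsub : A ⊆ B := by
      rw [Finset.card_eq_zero, Finset.sdiff_eq_empty_iff_subset] at hk
      exact hk
    have : A = B := Finset.eq_of_subset_of_card_le hsub (by rw [hA.1, hB.1])
    rw [this]
  | succ k ih =>
    intro A hA hk
    obtain ⟨i, hi⟩ : (A \ B).Nonempty := by
      rw [← Finset.card_pos]; omega
    obtain ⟨hiA, hiB⟩ := Finset.mem_sdiff.1 hi
    have hcS : (A.erase i).card = m - 1 := by rw [Finset.card_erase_of_mem hiA, hA.1]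
    have hcT : (insert i B).card = m + 1 := by rw [Finset.card_insert_of_notMem hiB, hB.1]
    obtain ⟨j, hj, hji, hle⟩ := hp (A.erase i) (insert i B) hcS hcT i (by simp)
    rw [Finset.insert_erase hiA, Finset.erase_insert hiB] at hle
    have hjB : j ∈ B := by
      simp only [mem_sdiff, mem_insert] at hj
      tauto
    have hjA : j ∉ A := by
      simp only [mem_sdiff, mem_erase] at hj
      tauto
    have hjS : j ∉ A.erase i := fun h => hjA (Finset.mem_of_mem_erase h)
    obtain ⟨a, ha⟩ := WithTop.ne_top_iff_exists.1 hA.2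
    obtain ⟨b, hb⟩ := WithTop.ne_top_iff_exists.1 hB.2
    have hfin : p (insert j (A.erase i)) + p ((insert i B).erase j) ≠ ⊤ := by
      refine ne_top_of_le_ne_top ?_ hle
      rw [← ha, ← hb, ← WithTop.coe_add]
      exact WithTop.coe_ne_top
    rw [WithTop.add_ne_top] at hfin
    obtain ⟨c, hc⟩ := WithTop.ne_top_iff_exists.1 hfin.1
    obtain ⟨d, hd⟩ := WithTop.ne_top_iff_exists.1 hfin.2
    have hle' : c + d ≤ a + b := by
      rw [← ha, ← hb, ← hc, ← hd] at hle
      exact_mod_cast hle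
    have h1 := fB_le_aux n p B x i j hiB hjB d hd.symm
    have h2 := ih (insert j (A.erase i))
      ⟨by rw [Finset.card_insert_of_notMem hjS, hcS]; omega, hfin.1⟩ (by
        have : insert j (A.erase i) \ B = (A \ B).erase i := by
          ext t
          simp only [mem_sdiff, mem_insert, mem_erase]
          constructor
          · rintro ⟨rfl | h, h'⟩
            · exact absurd hjB h'
            · tauto
          · tauto
        rw [this, Finset.card_erase_of_mem hi]; omega)
    refine le_trans ?_ h2
    unfold wgt
    rw [Finset.sum_insert hjS, ← Finset.add_sum_erase A _ hiA, ← ha, ← hc]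
    rw [← hb] at h1
    simp only [WithTop.untopD_coe] at h1 ⊢
    linarith
end

section
/- Let p be a tropical Plücker vector of rank m on {1,…,n}, let B ∈ supp(p), and assume that for every i ∉ B there exists b ∈ B with (B∪{i})∖{b} ∈ supp(p). Then for every x ∈ ℝ^B the vector f_B(x) lies in the tropical linear space L(p); that is, f_B(x) is tropically orthogonal to c_S for every (m+1)-element subset S of {1,…,n}. -/
open Finset

lemma fB_outside (n m : ℕ) 
    (p : Finset (Fin n) → WithTop ℝ)
    (B : Finset (Fin n)) (hB : suppMem n m p B)
    (hcov : ∀ i : Fin n, i ∉ B → ∃ b ∈ B, suppMem n m p ((insert i B).erase b))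
    (x : {i : Fin n // i ∈ B} → ℝ) (i : Fin n) (hi : i ∉ B) :
    ((fB n p B x i : ℝ) : WithTop ℝ) + p B =
      B.attach.inf fun b => (x b : WithTop ℝ) + p ((insert i B).erase b.1) := by
  obtain ⟨b, hb, -, hbt⟩ := hcov i hi
  have hne : (B.attach.inf fun b => (x b : WithTop ℝ) + p ((insert i B).erase b.1)) ≠ ⊤ := by
    intro h
    have h1 := Finset.inf_le (f := fun b : {i : Fin n // i ∈ B} =>
      (x b : WithTop ℝ) + p ((insert i B).erase b.1)) (Finset.mem_attach B ⟨b, hb⟩)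
    rw [h, top_le_iff] at h1
    simp [WithTop.add_eq_top] at h1
    exact hbt h1
  obtain ⟨r, hr⟩ := WithTop.ne_top_iff_exists.1 hne
  obtain ⟨q, hq⟩ := WithTop.ne_top_iff_exists.1 hB.2
  simp only [fB, hi, dif_neg, not_false_eq_true]
  rw [← hr, ← hq]
  simp only [WithTop.untopD_coe]
  rw [← WithTop.coe_add]
  simp

lemma swap_eq (n : ℕ) (B : Finset (Fin n)) (i b : Fin n) (hi : i ∉ B) (hb : b ∈ B) :
    insert i (B.erase b) = (insert i B).erase b := by
  ext k; simp only [mem_insert, mem_erase]; grind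

/-- The image of `f_B` lies in the tropical linear space `L(p)`. -/
theorem fB_mem_L (n m : ℕ) (hm : 1 ≤ m) (hmn : m ≤ n)
    (p : Finset (Fin n) → WithTop ℝ) (hp : IsTropPlucker n m p)
    (B : Finset (Fin n)) (hB : suppMem n m p B)
    (hcov : ∀ i : Fin n, i ∉ B → ∃ b ∈ B, suppMem n m p ((insert i B).erase b)) :
    ∀ x : {i : Fin n // i ∈ B} → ℝ, memL n m p (fun i => ((fB n p B x i : ℝ) : WithTop ℝ)) := by
  intro x S hS
  have le1 : ∀ b : {i : Fin n // i ∈ B}, ∀ i ∉ B.erase b.1,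
      ((fB n p B x i : ℝ) : WithTop ℝ) + p B ≤ x b + p (insert i (B.erase b.1)) := by
    intro b i hi
    by_cases h : i ∈ B
    · have : i = b.1 := by
        by_contra hne
        exact hi (mem_erase.2 ⟨hne, h⟩)
      subst this
      rw [insert_erase h]
      simp [fB]
    · rw [fB_outside n m p B hB hcov x i h, swap_eq n B i b.1 h b.2]
      exact Finset.inf_le (f := fun b : {i : Fin n // i ∈ B} =>
        (x b : WithTop ℝ) + p ((insert i B).erase b.1)) (Finset.mem_attach B b)
  have ex1 : ∀ i, ∃ b : {i : Fin n // i ∈ B}, i ∉ B.erase b.1 ∧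
      ((fB n p B x i : ℝ) : WithTop ℝ) + p B = x b + p (insert i (B.erase b.1)) := by
    intro i
    by_cases h : i ∈ B
    · refine ⟨⟨i, h⟩, by simp, ?_⟩
      rw [insert_erase h]
      simp [fB, h]
    · obtain ⟨b0, hb0, -⟩ := hcov i h
      obtain ⟨b, -, hb⟩ := Finset.exists_mem_eq_inf B.attach ⟨⟨b0, hb0⟩, Finset.mem_attach _ _⟩
        (fun b : {i : Fin n // i ∈ B} => (x b : WithTop ℝ) + p ((insert i B).erase b.1))
      refine ⟨b, fun h' => h (mem_of_mem_erase h'), ?_⟩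
      rw [fB_outside n m p B hB hcov x i h, swap_eq n B i b.1 h b.2]
      exact hb
  have key : ∀ i, ∃ j, j ≠ i ∧ ((fB n p B x j : ℝ) : WithTop ℝ) + circVec n p S j ≤
      ((fB n p B x i : ℝ) : WithTop ℝ) + circVec n p S i := by
    intro i
    by_cases hi : i ∈ S
    · obtain ⟨b, hb, hbe⟩ := ex1 i
      obtain ⟨j, hj, hji, hle⟩ := hp (B.erase b.1) S
        (by rw [card_erase_of_mem b.2, hB.1]) hS i (mem_sdiff.2 ⟨hi, hb⟩)
      rw [mem_sdiff] at hj
      refine ⟨j, hji, ?_⟩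
      simp only [circVec, hi, hj.1, if_true]
      have h2 := le1 b j hj.2
      refine (WithTop.add_le_add_iff_right hB.2).1 ?_
      calc _ = ((fB n p B x j : ℝ) : WithTop ℝ) + p B + p (S.erase j) := by
              rw [add_right_comm]
        _ ≤ x b + p (insert j (B.erase b.1)) + p (S.erase j) := by gcongr
        _ = x b + (p (insert j (B.erase b.1)) + p (S.erase j)) := add_assoc _ _ _
        _ ≤ x b + (p (insert i (B.erase b.1)) + p (S.erase i)) := by gcongr
        _ = _ := by rw [← add_assoc, ← hbe, add_right_comm]
    · obtain ⟨j, -, hj⟩ := Finset.exists_mem_ne (s := S) (by omega) i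
      exact ⟨j, hj, by simp [circVec, hi]⟩
  right
  have hne : (univ : Finset (Fin n)).Nonempty := ⟨⟨0, by omega⟩, mem_univ _⟩
  obtain ⟨i, -, hi⟩ := Finset.exists_min_image univ
    (fun i => ((fB n p B x i : ℝ) : WithTop ℝ) + circVec n p S i) hne
  obtain ⟨j, hji, hj⟩ := key i
  exact ⟨i, j, hji.symm, le_antisymm (hi j (mem_univ _)) hj, fun k => hi k (mem_univ _)⟩
end

section
/- Let p be a tropical Plücker vector of rank m on {1,…,n}, let B ∈ supp(p), and let v ∈ L(p)_B. Then for every i ∈ {1,…,n}∖B one has p_B + v_i = min{ p_{(B∪{i})∖{b}} + v_b : b ∈ B }, where the minimum is taken in 𝕋 (terms with (B∪{i})∖{b} ∉ supp(p) are ∞); in particular this minimum is a real number. Consequently v is determined by its coordinates indexed by B, i.e., f_B is surjective onto L(p)_B whenever f_B is defined. -/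
open Finset

theorem local_min_aux (n m : ℕ)
    (p : Finset (Fin n) → WithTop ℝ)
    (B : Finset (Fin n)) (hB : suppMem n m p B)
    (v : Fin n → ℝ) (hv : memLocal n m p B v) (i : Fin n) (hi : i ∉ B) :
      B.inf (fun b => p ((insert i B).erase b) + (v b : WithTop ℝ))
        = p B + (v i : WithTop ℝ) := by
  obtain ⟨hS, hL⟩ := hv
  obtain ⟨hc, hfin⟩ := hB
  have hcard : (insert i B).card = m + 1 := by rw [card_insert_of_notMem hi, hc]
  have hle : ∀ b ∈ B, p B + (v i : WithTop ℝ) ≤ p ((insert i B).erase b) + (v b : WithTop ℝ) := by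
    intro b hb
    by_cases ht : p ((insert i B).erase b) = ⊤
    · rw [ht]; simp
    have hbS : b ∈ insert i B := mem_insert_of_mem hb
    have h := hS ((insert i B).erase b)
      ⟨by rw [card_erase_of_mem hbS, hcard]; rfl, ht⟩
    unfold wgt at h
    have hsum := Finset.add_sum_erase (insert i B) v hbS
    rw [Finset.sum_insert hi] at hsum
    obtain ⟨x, hx⟩ := WithTop.ne_top_iff_exists.mp ht
    obtain ⟨y, hy⟩ := WithTop.ne_top_iff_exists.mp hfin
    rw [← hx, ← hy] at h ⊢
    simp only [WithTop.untopD_coe] at h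
    norm_cast
    linarith
  have hex : ∃ b ∈ B, p ((insert i B).erase b) + (v b : WithTop ℝ) ≤ p B + (v i : WithTop ℝ) := by
    have hci : circVec n p (insert i B) i = p B := by
      simp [circVec, erase_insert hi]
    have key : ∀ k, k ≠ i →
        (v k : WithTop ℝ) + circVec n p (insert i B) k ≤ (v i : WithTop ℝ) + p B →
        ∃ b ∈ B, p ((insert i B).erase b) + (v b : WithTop ℝ) ≤ p B + (v i : WithTop ℝ) := by
      intro k hk h
      by_cases hkB : k ∈ B
      · refine ⟨k, hkB, ?_⟩
        rw [circVec, if_pos (mem_insert_of_mem hkB)] at h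
        rwa [add_comm, add_comm (p B)]
      · rw [circVec, if_neg (by simp [hk, hkB])] at h
        simp [hfin] at h
    rcases hL _ hcard with h | ⟨j, k, hjk, he, hmin⟩
    · have := h i
      rw [hci] at this
      simp [hfin] at this
    · have hm := hmin i
      simp only [hci] at hm he
      by_cases hj : j = i
      · exact key k (fun h => hjk (hj.trans h.symm)) (he ▸ hm)
      · exact key j hj hm
  apply le_antisymm
  · obtain ⟨b, hb, h⟩ := hex
    exact (Finset.inf_le hb).trans h
  · exact Finset.le_inf hle

/-- For `v ∈ L(p)_B` and `i ∉ B`, one has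
`p_B + v_i = min_{b ∈ B} (p_{(B ∪ i) ∖ b} + v_b)` in `𝕋`; consequently a vector of
`L(p)_B` is determined by its coordinates indexed by `B`. -/
theorem local_min_formula (n m : ℕ) (hm : 1 ≤ m) (hmn : m ≤ n)
    (p : Finset (Fin n) → WithTop ℝ) (hp : IsTropPlucker n m p)
    (B : Finset (Fin n)) (hB : suppMem n m p B)
    (v : Fin n → ℝ) (hv : memLocal n m p B v) :
    (∀ i : Fin n, i ∉ B →
      B.inf (fun b => p ((insert i B).erase b) + (v b : WithTop ℝ))
        = p B + (v i : WithTop ℝ)) ∧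
    (∀ w : Fin n → ℝ, memLocal n m p B w → (∀ b ∈ B, w b = v b) → w = v) := by
  refine ⟨local_min_aux n m p B hB v hv, ?_⟩
  intro w hw hwv
  funext i
  by_cases hi : i ∈ B
  · exact hwv i hi
  have h1 := local_min_aux n m p B hB v hv i hi
  have h2 := local_min_aux n m p B hB w hw i hi
  have h3 : B.inf (fun b => p ((insert i B).erase b) + (w b : WithTop ℝ))
      = B.inf (fun b => p ((insert i B).erase b) + (v b : WithTop ℝ)) :=
    Finset.inf_congr rfl (fun b hb => by rw [hwv b hb])
  rw [h1, h2] at h3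
  obtain ⟨y, hy⟩ := WithTop.ne_top_iff_exists.mp hB.2
  rw [← hy] at h3
  norm_cast at h3
  linarith
end

section
/- Let p be a tropical Plücker vector of rank m on {1,…,n} with supp(p) nonempty, and let v ∈ ℝⁿ. Let 𝓑_v be the collection of B ∈ supp(p) with w_p(v,B) ≥ w_p(v,A) for all A ∈ supp(p). Then 𝓑_v is nonempty and satisfies the basis exchange property: for all A, B ∈ 𝓑_v and every a ∈ A∖B there exists b ∈ B∖A with (A∖{a})∪{b} ∈ 𝓑_v. In particular, 𝓑_v is the set of bases of a matroid M_v on {1,…,n}. -/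
open Finset

/-- `B` is a basis of maximal `v`-weight. -/
def MaxWeightBasis (n m : ℕ) (p : Finset (Fin n) → WithTop ℝ) (v : Fin n → ℝ)
    (B : Finset (Fin n)) : Prop :=
  suppMem n m p B ∧ ∀ A, suppMem n m p A → wgt n p v A ≤ wgt n p v B

/-- The collection `𝓑_v` of bases of maximal `v`-weight is nonempty and
satisfies the basis exchange property; in particular it is the set of bases of a
matroid `M_v` on `{1,…,n}`. -/
theorem max_weight_bases_exchange (n m : ℕ) (hm : 1 ≤ m) (hmn : m ≤ n)
    (p : Finset (Fin n) → WithTop ℝ) (hp : IsTropPlucker n m p)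
    (hne : ∃ B, suppMem n m p B) (v : Fin n → ℝ) :
    (∃ B, MaxWeightBasis n m p v B) ∧
    (∀ A B : Finset (Fin n), MaxWeightBasis n m p v A → MaxWeightBasis n m p v B →
      ∀ a ∈ A \ B, ∃ b ∈ B \ A, MaxWeightBasis n m p v (insert b (A.erase a))) ∧
    (∃ M : Matroid (Fin n), ∀ S : Set (Fin n),
      M.IsBase S ↔ ∃ A : Finset (Fin n), (A : Set (Fin n)) = S ∧ MaxWeightBasis n m p v A) := by
  have hex : ∀ A B : Finset (Fin n), MaxWeightBasis n m p v A → MaxWeightBasis n m p v B →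
      ∀ a ∈ A \ B, ∃ b ∈ B \ A, MaxWeightBasis n m p v (insert b (A.erase a)) := by
    rintro A B ⟨⟨hA, hpA⟩, hAm⟩ ⟨⟨hB, hpB⟩, hBm⟩ a ha
    obtain ⟨haA, haB⟩ := Finset.mem_sdiff.1 ha
    obtain ⟨j, hj, hja, hle⟩ := hp (A.erase a) (insert a B)
      (by rw [Finset.card_erase_of_mem haA, hA])
      (by rw [Finset.card_insert_of_notMem haB, hB]) a (by simp)
    have hjB : j ∈ B := by
      have := (Finset.mem_sdiff.1 hj).1
      simpa [hja] using this
    have hjA : j ∉ A := by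
      have := (Finset.mem_sdiff.1 hj).2
      simpa [hja] using this
    rw [Finset.insert_erase haA, Finset.erase_insert haB] at hle
    have hjA2 : j ∉ A.erase a := fun h => hjA (Finset.mem_of_mem_erase h)
    have hjB2 : j ∈ insert a B := Finset.mem_insert_of_mem hjB
    have hc1 : (insert j (A.erase a)).card = m := by
      rw [Finset.card_insert_of_notMem hjA2, Finset.card_erase_of_mem haA, hA]; omega
    have hc2 : ((insert a B).erase j).card = m := by
      rw [Finset.card_erase_of_mem hjB2, Finset.card_insert_of_notMem haB, hB]; omega
    have hs1 : ∑ i ∈ insert j (A.erase a), v i + v a = v j + ∑ i ∈ A, v i := by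
      rw [Finset.sum_insert hjA2, add_assoc, Finset.sum_erase_add _ _ haA]
    have hs2 : ∑ i ∈ (insert a B).erase j, v i + v j = v a + ∑ i ∈ B, v i := by
      rw [Finset.sum_erase_add _ _ hjB2, Finset.sum_insert haB]
    have hne' : p (insert j (A.erase a)) + p ((insert a B).erase j) ≠ ⊤ :=
      ne_top_of_le_ne_top (WithTop.add_ne_top.2 ⟨hpA, hpB⟩) hle
    obtain ⟨h1, h2⟩ := WithTop.add_ne_top.1 hne'
    have w1 := hAm _ ⟨hc1, h1⟩
    have w2 := hBm _ ⟨hc2, h2⟩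
    refine ⟨j, Finset.mem_sdiff.2 ⟨hjB, hjA⟩, ⟨hc1, h1⟩, fun C hC => (hAm C hC).trans ?_⟩
    unfold wgt at w1 w2 ⊢
    obtain ⟨x1, hx1⟩ := WithTop.ne_top_iff_exists.1 h1
    obtain ⟨x2, hx2⟩ := WithTop.ne_top_iff_exists.1 h2
    obtain ⟨x3, hx3⟩ := WithTop.ne_top_iff_exists.1 hpA
    obtain ⟨x4, hx4⟩ := WithTop.ne_top_iff_exists.1 hpB
    rw [← hx1, ← hx2, ← hx3, ← hx4] at hle
    rw [← hx1, ← hx3] at w1 ⊢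
    rw [← hx2, ← hx4] at w2
    norm_cast at hle
    simp only [WithTop.untopD_coe] at w1 w2 ⊢
    linarith
  have hnon : ∃ B, MaxWeightBasis n m p v B := by
    classical
    obtain ⟨B₀, hB₀⟩ := hne
    obtain ⟨B, hB, hmax⟩ := Finset.exists_max_image
      ((Finset.univ : Finset (Finset (Fin n))).filter (fun B => suppMem n m p B)) (wgt n p v)
      ⟨B₀, by simpa using hB₀⟩
    exact ⟨B, by simpa using hB, fun A hA => hmax A (by simpa using hA)⟩
  refine ⟨hnon, hex, Matroid.ofIsBaseOfFinite (E := Set.univ) Set.finite_univ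
    (fun S => ∃ A : Finset (Fin n), (A : Set (Fin n)) = S ∧ MaxWeightBasis n m p v A)
    ?_ ?_ (fun _ _ => Set.subset_univ _), fun S => ?_⟩
  · obtain ⟨B, hB⟩ := hnon
    exact ⟨B, B, rfl, hB⟩
  · rintro _ _ ⟨A, rfl, hA⟩ ⟨B, rfl, hB⟩ a ha
    obtain ⟨b, hb, h⟩ := hex A B hA hB a (by simpa using ha)
    exact ⟨b, by simpa using hb, _, by simp, h⟩
  · exact Iff.rfl
end

section
/- Let B be an m-element subset of {1,…,n} and let V : B × ({1,…,n}∖B) → 𝕋 be any matrix. Then the vector τ_V of tropical maximal minors of the augmented matrix V̄, defined on m-element subsets A of {1,…,n} by τ_V(A) = min over bijections σ : B → A of Σ_{i∈B} V̄(i, σ(i)), is a tropical Plücker vector of rank m on {1,…,n}. -/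
open Finset

/-- The alternating path from `i`, recorded by its set `Q` of rows. -/
lemma exists_path {α β : Type*} [DecidableEq α] [DecidableEq β] (f g : α → β) (k : ℕ) :
    ∀ (P : Finset α) (i : β), P.card = k → Set.InjOn f P → Set.InjOn g P →
      i ∈ P.image f → i ∉ P.image g →
      ∃ Q ⊆ P, ∃ j ∈ P.image g, j ∉ P.image f ∧
        insert j (Q.image f) = insert i (Q.image g) := by
  induction k with
  | zero =>
    intro P i hP _ _ hi
    rw [Finset.card_eq_zero] at hP
    subst hP
    simp at hi
  | succ k ih =>
    intro P i hP hf hg hi hi'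
    obtain ⟨b, hb, rfl⟩ := Finset.mem_image.1 hi
    by_cases hj : g b ∈ P.image f
    · obtain ⟨c, hc, hcb⟩ := Finset.mem_image.1 hj
      have hne : ∀ x ∈ P, g x ≠ f b := fun x hx h => hi' (Finset.mem_image.2 ⟨x, hx, h⟩)
      have hcb' : c ≠ b := by
        rintro rfl
        exact hne c hb hcb.symm
      have hsub : (P.erase b : Finset α) ⊆ P := Finset.erase_subset _ _
      obtain ⟨Q, hQ, j, hj1, hj2, hQe⟩ := ih (P.erase b) (g b)
        (by rw [Finset.card_erase_of_mem hb, hP]; rfl)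
        (hf.mono (by exact_mod_cast hsub)) (hg.mono (by exact_mod_cast hsub))
        (Finset.mem_image.2 ⟨c, Finset.mem_erase.2 ⟨hcb', hc⟩, hcb⟩)
        (by
          intro h
          obtain ⟨d, hd, hdb⟩ := Finset.mem_image.1 h
          rw [Finset.mem_erase] at hd
          exact hd.1 (hg hd.2 hb hdb))
      refine ⟨insert b Q, ?_, j, Finset.image_subset_image hsub hj1, ?_, ?_⟩
      · exact Finset.insert_subset hb (hQ.trans hsub)
      · intro h
        obtain ⟨d, hd, hdj⟩ := Finset.mem_image.1 h
        by_cases hdb : d = b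
        · subst hdb
          obtain ⟨e, he, hej⟩ := Finset.mem_image.1 hj1
          exact hne e (hsub he) (hej.trans hdj.symm)
        · exact hj2 (Finset.mem_image.2 ⟨d, Finset.mem_erase.2 ⟨hdb, hd⟩, hdj⟩)
      · rw [Finset.image_insert, Finset.image_insert, ← hQe, Finset.insert_comm]
    · refine ⟨{b}, by simpa using hb, g b, Finset.mem_image_of_mem g hb, hj, ?_⟩
      simp [Finset.pair_comm]

/-- Swapping along the path. -/
lemma swap_image {α β : Type*} [DecidableEq α] [DecidableEq β] (f g : α → β)
    (Q : Finset α) (i j : β) (S T : Finset β) (hij : i ≠ j)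
    (hf : Function.Injective f)
    (hfS : ∀ x, x ∈ insert i S ↔ ∃ b, f b = x) (hgT : ∀ x, x ∈ insert j T ↔ ∃ b, g b = x)
    (hiS : i ∉ S) (hiT : i ∉ T)
    (hQ : insert j (Q.image f) = insert i (Q.image g)) :
    ∀ x, x ∈ insert j S ↔ ∃ b, (if b ∈ Q then g b else f b) = x := by
  have hQ' : ∀ x, (x = j ∨ ∃ b ∈ Q, f b = x) ↔ (x = i ∨ ∃ b ∈ Q, g b = x) := by
    intro x
    simpa using Finset.ext_iff.1 hQ x
  simp only [Finset.mem_insert] at hfS hgT ⊢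
  have hgi : ∀ b, g b ≠ i := by
    intro b hb
    rcases (hgT i).2 ⟨b, hb⟩ with h | h
    exacts [hij h, hiT h]
  obtain ⟨q, hq, hqi⟩ : ∃ b ∈ Q, f b = i := ((hQ' i).2 (Or.inl rfl)).resolve_left hij
  intro x
  constructor
  · rintro (rfl | hx)
    · obtain ⟨b, hb, h⟩ := ((hQ' x).1 (Or.inl rfl)).resolve_left hij.symm
      exact ⟨b, by simp [hb, h]⟩
    · obtain ⟨b, hb⟩ := (hfS x).1 (Or.inr hx)
      by_cases hbQ : b ∈ Q
      · obtain ⟨c, hc, h⟩ := ((hQ' x).1 (Or.inr ⟨b, hbQ, hb⟩)).resolve_left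
          (fun h => hiS (h ▸ hx))
        exact ⟨c, by simp [hc, h]⟩
      · exact ⟨b, by simp [hbQ, hb]⟩
  · rintro ⟨b, hb⟩
    by_cases hbQ : b ∈ Q
    · rw [if_pos hbQ] at hb
      rcases (hQ' x).2 (Or.inr ⟨b, hbQ, hb⟩) with h | ⟨c, hc, h⟩
      · exact Or.inl h
      · exact Or.inr (((hfS x).2 ⟨c, h⟩).resolve_left (fun h' => hgi b (hb.trans h')))
    · rw [if_neg hbQ] at hb
      refine Or.inr (((hfS x).2 ⟨b, hb⟩).resolve_left ?_)
      intro h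
      have : b = q := hf (by rw [hb, h, hqi])
      exact hbQ (this ▸ hq)

lemma tauV_le (n : ℕ) (B : Finset (Fin n))
    (V : {i : Fin n // i ∈ B} → {j : Fin n // j ∉ B} → WithTop ℝ)
    (A : Finset (Fin n)) (hA : A.card = B.card) (f : {i : Fin n // i ∈ B} → Fin n)
    (hf : ∀ x, x ∈ A ↔ ∃ b, f b = x) :
    tauV n B V A ≤ ∑ b, augMat n B V b (f b) := by
  let F : {i : Fin n // i ∈ B} → {j : Fin n // j ∈ A} := fun b => ⟨f b, (hf _).2 ⟨b, rfl⟩⟩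
  have hs : Function.Surjective F := by
    rintro ⟨x, hx⟩
    obtain ⟨b, hb⟩ := (hf x).1 hx
    exact ⟨b, Subtype.ext hb⟩
  have hbij : Function.Bijective F :=
    (Fintype.bijective_iff_surjective_and_card F).2 ⟨hs, by simp [hA]⟩
  exact Finset.inf_le (f := fun σ : {i : Fin n // i ∈ B} ≃ {j : Fin n // j ∈ A} =>
    ∑ i : {i : Fin n // i ∈ B}, augMat n B V i (σ i).1)
    (Finset.mem_univ (Equiv.ofBijective F hbij))

lemma exists_tauV (n : ℕ) (B : Finset (Fin n))
    (V : {i : Fin n // i ∈ B} → {j : Fin n // j ∉ B} → WithTop ℝ)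
    (A : Finset (Fin n)) (hA : A.card = B.card) :
    ∃ f : {i : Fin n // i ∈ B} → Fin n, Function.Injective f ∧
      (∀ x, x ∈ A ↔ ∃ b, f b = x) ∧ tauV n B V A = ∑ b, augMat n B V b (f b) := by
  have hne : Nonempty ({i : Fin n // i ∈ B} ≃ {j : Fin n // j ∈ A}) :=
    ⟨Fintype.equivOfCardEq (by simp [hA])⟩
  obtain ⟨σ, -, hσ⟩ := Finset.exists_mem_eq_inf Finset.univ Finset.univ_nonempty
    (fun σ : {i : Fin n // i ∈ B} ≃ {j : Fin n // j ∈ A} =>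
      ∑ i : {i : Fin n // i ∈ B}, augMat n B V i (σ i).1)
  refine ⟨fun b => (σ b).1, Subtype.val_injective.comp σ.injective, ?_, hσ⟩
  intro x
  constructor
  · intro hx
    exact ⟨σ.symm ⟨x, hx⟩, by simp⟩
  · rintro ⟨b, rfl⟩
    exact (σ b).2

/-- The vector of tropical maximal minors of the augmented matrix `V̄`
is a tropical Plücker vector of rank `m`. -/
theorem tauV_isTropPlucker (n m : ℕ) (hm : 1 ≤ m) (hmn : m ≤ n)
    (B : Finset (Fin n)) (hB : B.card = m)
    (V : {i : Fin n // i ∈ B} → {j : Fin n // j ∉ B} → WithTop ℝ) :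
    IsTropPlucker n m (tauV n B V) := by
  intro S T hS hT i hi
  obtain ⟨hiT, hiS⟩ := Finset.mem_sdiff.1 hi
  have cS : ∀ x, x ∉ S → (insert x S).card = B.card := fun x hx => by
    rw [Finset.card_insert_of_notMem hx]; omega
  have cT : ∀ x, x ∈ T → (T.erase x).card = B.card := fun x hx => by
    rw [Finset.card_erase_of_mem hx]; omega
  obtain ⟨f, hf, hfS, hfe⟩ := exists_tauV n B V _ (cS i hiS)
  obtain ⟨g, hg, hgT, hge⟩ := exists_tauV n B V _ (cT i hiT)
  obtain ⟨Q, -, j, hj1, hj2, hQ⟩ := exists_path f g _ Finset.univ i rfl hf.injOn hg.injOn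
    (by simpa using (hfS i).1 (Finset.mem_insert_self _ _))
    (by
      intro h
      have := (hgT i).2 (by simpa using h)
      simp at this)
  have hjT : j ∈ T.erase i := (hgT j).2 (by simpa using hj1)
  have hjS : j ∉ insert i S := fun h => hj2 (by simpa using (hfS j).1 h)
  obtain ⟨hji, hjT'⟩ := Finset.mem_erase.1 hjT
  have hjS' : j ∉ S := fun h => hjS (Finset.mem_insert_of_mem h)
  refine ⟨j, Finset.mem_sdiff.2 ⟨hjT', hjS'⟩, hji, ?_⟩
  have e1 : insert j ((T.erase i).erase j) = T.erase i := Finset.insert_erase hjT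
  have e2 : insert i ((T.erase i).erase j) = T.erase j := by
    rw [Finset.erase_right_comm]
    exact Finset.insert_erase (Finset.mem_erase.2 ⟨hji.symm, hiT⟩)
  have h1 := swap_image f g Q i j S ((T.erase i).erase j) hji.symm hf hfS
    (by rw [e1]; exact hgT) hiS (by simp) hQ
  have h2 := swap_image g f Q j i ((T.erase i).erase j) S hji hg
    (by rw [e1]; exact hgT) hfS (by simp) hjS' hQ.symm
  rw [e2] at h2
  calc _ ≤ _ := add_le_add (tauV_le n B V _ (cS j hjS') _ h1) (tauV_le n B V _ (cT j hjT') _ h2)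
    _ = _ := by
      rw [hfe, hge, ← Finset.sum_add_distrib, ← Finset.sum_add_distrib]
      refine Finset.sum_congr rfl fun b _ => ?_
      by_cases hb : b ∈ Q
      · simp only [hb, if_true]
        exact add_comm _ _
      · simp only [hb, if_false]
    _ ≤ _ := le_rfl
end

section
/- Let 𝓑 be a nonempty collection of m-element subsets of {1,…,n} satisfying the basis exchange property (so 𝓑 is the set of bases of a matroid of rank m on {1,…,n}), and let B ∈ 𝓑. Then the vertex figure of the matroid polytope at e_B equals the hyperplane section: convexHull{ e_A : A ∈ 𝓑, |A∖B| = 1 } = convexHull{ e_A : A ∈ 𝓑 } ∩ { x ∈ ℝⁿ : Σ_{i∈B} x_i = m−1 }. -/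
open Finset

theorem matroid_symm_exchange {α : Type*} (M : Matroid α) {A B : Set α} (hA : M.IsBase A)
    (hB : M.IsBase B) {a : α} (ha : a ∈ A) (haB : a ∉ B) :
    ∃ b, b ∈ B ∧ b ∉ A ∧ M.IsBase (insert b (A \ {a})) ∧ M.IsBase (insert a (B \ {b})) := by
  have haE : a ∈ M.E := hA.subset_ground ha
  have hC := hB.fundCircuit_isCircuit haE haB
  have hcl := hC.mem_closure_sdiff_singleton_of_mem (M.mem_fundCircuit a B)
  have hna : a ∉ M.closure (A \ {a}) := hA.indep.notMem_closure_sdiff_of_mem ha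
  have hex : ∃ b ∈ M.fundCircuit a B \ {a}, b ∉ M.closure (A \ {a}) := by
    by_contra hcon
    push Not at hcon
    exact hna (M.closure_subset_closure_of_subset_closure hcon hcl)
  obtain ⟨b, ⟨hbC, hba⟩, hb⟩ := hex
  have hba : b ≠ a := hba
  have hbB : b ∈ B := by
    rcases M.fundCircuit_subset_insert a B hbC with h | h
    · exact absurd h hba
    · exact h
  have hbE : b ∈ M.E := hB.subset_ground hbB
  have hbA : b ∉ A := fun h =>
    hb (M.subset_closure (A \ {a}) (Set.sdiff_subset.trans hA.subset_ground) ⟨h, hba⟩)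
  refine ⟨b, hbB, hbA, hA.exchange_base_of_notMem_closure ha hb, ?_⟩
  have h1 := (hB.indep.mem_fundCircuit_iff (by rwa [hB.closure_eq]) haB).1 hbC
  have h2 := hB.exchange_isBase_of_indep' hbB haB h1
  rwa [← Set.insert_sdiff_singleton_comm hba.symm] at h2

theorem finset_symm_exchange (n : ℕ) (𝓑 : Finset (Finset (Fin n)))
    (hex : ∀ A ∈ 𝓑, ∀ B ∈ 𝓑, ∀ a ∈ A \ B, ∃ b ∈ B \ A, insert b (A.erase a) ∈ 𝓑)
    (A B : Finset (Fin n)) (hA : A ∈ 𝓑) (hB : B ∈ 𝓑) (a : Fin n) (ha : a ∈ A) (haB : a ∉ B) :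
    ∃ b, b ∈ B ∧ b ∉ A ∧ insert b (A.erase a) ∈ 𝓑 ∧ insert a (B.erase b) ∈ 𝓑 := by
  classical
  let P : Set (Fin n) → Prop := fun X => ∃ Y ∈ 𝓑, (Y : Set (Fin n)) = X
  have hP : ∀ Y : Finset (Fin n), P (Y : Set (Fin n)) ↔ Y ∈ 𝓑 := by
    intro Y
    constructor
    · rintro ⟨Z, hZ, h⟩
      rw [← Finset.coe_injective h]; exact hZ
    · intro h; exact ⟨Y, h, rfl⟩
  have hE : Matroid.ExchangeProperty P := by
    rintro _ _ ⟨X, hX, rfl⟩ ⟨Y, hY, rfl⟩ e he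
    obtain ⟨b, hb, hb'⟩ := hex X hX Y hY e (by simpa using he)
    refine ⟨b, by simpa using hb, ?_⟩
    rw [← Finset.coe_erase, ← Finset.coe_insert, hP]
    exact hb'
  let M : Matroid (Fin n) := Matroid.ofIsBaseOfFinite (Set.finite_univ) P ⟨_, A, hA, rfl⟩ hE
    (fun _ _ => Set.subset_univ _)
  have hM : ∀ X, M.IsBase X ↔ P X := fun X => Iff.rfl
  obtain ⟨b, h1, h2, h3, h4⟩ := matroid_symm_exchange M (A := A) (B := B) ((hM _).2 ⟨A, hA, rfl⟩)
    ((hM _).2 ⟨B, hB, rfl⟩) (a := a) (by simpa using ha) (by simpa using haB)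
  refine ⟨b, by simpa using h1, by simpa using h2, ?_, ?_⟩
  · rw [hM, ← Finset.coe_erase, ← Finset.coe_insert, hP] at h3
    exact h3
  · rw [hM, ← Finset.coe_erase, ← Finset.coe_insert, hP] at h4
    exact h4

/-- indicator vector -/
def indVec (n : ℕ) (A : Finset (Fin n)) : Fin n → ℝ := fun i => if i ∈ A then (1 : ℝ) else 0

theorem sum_indVec (n : ℕ) (A B : Finset (Fin n)) :
    ∑ i ∈ B, indVec n A i = (B.card : ℝ) - ((B \ A).card : ℝ) := by
  have h := Finset.card_sdiff_add_card_inter B A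
  have h' : ((B \ A).card : ℝ) + ((B ∩ A).card : ℝ) = B.card := by exact_mod_cast h
  simp only [indVec, Finset.sum_ite_mem, Finset.sum_const, nsmul_eq_mul, mul_one]
  linarith

theorem cone_lemma (n m : ℕ) (𝓑 : Finset (Finset (Fin n)))
    (hcard : ∀ A ∈ 𝓑, A.card = m)
    (hex : ∀ A ∈ 𝓑, ∀ B ∈ 𝓑, ∀ a ∈ A \ B, ∃ b ∈ B \ A, insert b (A.erase a) ∈ 𝓑)
    (B : Finset (Fin n)) (hB : B ∈ 𝓑) (k : ℕ) :
    ∀ A ∈ 𝓑, (A \ B).card = k → ∃ w : Finset (Fin n) → ℝ, (∀ X, 0 ≤ w X) ∧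
      indVec n A - indVec n B =
        ∑ X ∈ 𝓑.filter (fun X => (X \ B).card = 1), w X • (indVec n X - indVec n B) := by
  induction k with
  | zero =>
    intro A hA h
    have hsub : A ⊆ B := by simpa using h
    have hAB : A = B := Finset.eq_of_subset_of_card_le hsub (by rw [hcard A hA, hcard B hB])
    exact ⟨0, fun _ => le_rfl, by simp [hAB]⟩
  | succ k ih =>
    intro A hA h
    obtain ⟨a, ha⟩ : (A \ B).Nonempty := by
      rw [← Finset.card_pos]; omega
    obtain ⟨haA, haB⟩ := Finset.mem_sdiff.1 ha
    obtain ⟨b, hbB, hbA, h1, h2⟩ := finset_symm_exchange n 𝓑 hex A B hA hB a haA haB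
    have hab : a ≠ b := by rintro rfl; exact hbA haA
    have hc : (insert b (A.erase a) \ B).card = k := by
      have : insert b (A.erase a) \ B = (A \ B).erase a := by
        ext x
        by_cases hxb : x = b
        · subst hxb; simp [hbB]
        · simp [hxb, and_assoc]
      rw [this, Finset.card_erase_of_mem ha, h]; rfl
    have hc' : (insert a (B.erase b) \ B).card = 1 := by
      have : insert a (B.erase b) \ B = {a} := by
        ext x
        by_cases hxa : x = a
        · subst hxa; simp [haB]
        · simp +contextual [hxa]
      rw [this, Finset.card_singleton]
    obtain ⟨w, hw, hw'⟩ := ih _ h1 hc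
    refine ⟨w + Pi.single (insert a (B.erase b)) 1, ?_, ?_⟩
    · intro X
      have : (0 : Finset (Fin n) → ℝ) ≤ Pi.single (insert a (B.erase b)) 1 := by
        simp [Pi.single_nonneg]
      exact add_nonneg (hw X) (this X)
    · simp only [Pi.add_apply, add_smul, Finset.sum_add_distrib]
      rw [← hw', Finset.sum_eq_single (insert a (B.erase b))]
      · rw [Pi.single_eq_same, one_smul]
        ext i
        simp only [indVec, Pi.add_apply, Pi.sub_apply, Finset.mem_insert, Finset.mem_erase]
        by_cases hia : i = a
        · subst hia; simp [haA, haB, hab]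
        · by_cases hib : i = b
          · subst hib; simp [hbA, hbB, hia]
          · simp [hia, hib]
      · intro X _ hX
        rw [Pi.single_eq_of_ne hX, zero_smul]
      · intro hX
        exact absurd (Finset.mem_filter.2 ⟨h2, hc'⟩) hX

/-- The vertex figure of a matroid polytope at the vertex `e_B` equals
the intersection of the polytope with the hyperplane `∑_{i ∈ B} x_i = m - 1`. -/
theorem vertex_figure_eq_hyperplane_section (n m : ℕ) (hm : 1 ≤ m) (hmn : m ≤ n)
    (𝓑 : Finset (Finset (Fin n))) (hne : 𝓑.Nonempty)
    (hcard : ∀ A ∈ 𝓑, A.card = m)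
    (hex : ∀ A ∈ 𝓑, ∀ B ∈ 𝓑, ∀ a ∈ A \ B, ∃ b ∈ B \ A, insert b (A.erase a) ∈ 𝓑)
    (B : Finset (Fin n)) (hB : B ∈ 𝓑) :
    convexHull ℝ {x : Fin n → ℝ | ∃ A ∈ 𝓑, (A \ B).card = 1 ∧
        x = fun i => if i ∈ A then (1 : ℝ) else 0}
      = convexHull ℝ {x : Fin n → ℝ | ∃ A ∈ 𝓑, x = fun i => if i ∈ A then (1 : ℝ) else 0}
        ∩ {x : Fin n → ℝ | ∑ i ∈ B, x i = (m : ℝ) - 1} := by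
  classical
  change convexHull ℝ {x : Fin n → ℝ | ∃ A ∈ 𝓑, (A \ B).card = 1 ∧ x = indVec n A}
    = convexHull ℝ {x : Fin n → ℝ | ∃ A ∈ 𝓑, x = indVec n A}
        ∩ {x : Fin n → ℝ | ∑ i ∈ B, x i = (m : ℝ) - 1}
  have hBm := hcard B hB
  have hsum : ∀ A ∈ 𝓑, (A \ B).card = 1 → ∑ i ∈ B, indVec n A i = (m : ℝ) - 1 := by
    intro A hA h1
    have h2 : (B \ A).card = 1 := by
      rw [← h1]; exact Finset.card_sdiff_comm (by rw [hBm, hcard A hA])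
    rw [sum_indVec, h2, hBm]; simp
  have hsumB : ∑ i ∈ B, indVec n B i = (m : ℝ) := by
    rw [sum_indVec, hBm]; simp
  apply Set.Subset.antisymm
  · apply convexHull_min
    · rintro x ⟨A, hA, h1, rfl⟩
      exact ⟨subset_convexHull ℝ _ ⟨A, hA, rfl⟩, hsum A hA h1⟩
    · refine (convex_convexHull ℝ _).inter ?_
      intro x hx y hy s t hs ht hst
      simp only [Set.mem_setOf_eq] at hx hy ⊢
      simp only [Pi.add_apply, Pi.smul_apply, smul_eq_mul, Finset.sum_add_distrib,
        ← Finset.mul_sum, hx, hy]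
      rw [← add_mul, hst, one_mul]
  · rintro x ⟨hx, hxs⟩
    simp only [Set.mem_setOf_eq] at hxs
    let S := 𝓑.filter (fun X => (X \ B).card = 1)
    let Q : Set (Fin n → ℝ) := {x | ∃ w : Finset (Fin n) → ℝ, (∀ X, 0 ≤ w X) ∧
      x - indVec n B = ∑ X ∈ S, w X • (indVec n X - indVec n B)}
    have hQ : Convex ℝ Q := by
      rintro x ⟨w, hw, hx⟩ y ⟨v, hv, hy⟩ s t hs ht hst
      refine ⟨s • w + t • v, fun X => ?_, ?_⟩
      · exact add_nonneg (mul_nonneg hs (hw X)) (mul_nonneg ht (hv X))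
      · simp only [Pi.add_apply, Pi.smul_apply, smul_eq_mul, add_smul, mul_smul,
          Finset.sum_add_distrib, ← Finset.smul_sum]
        rw [← hx, ← hy]
        have : indVec n B = (s + t) • indVec n B := by rw [hst, one_smul]
        rw [smul_sub, smul_sub]
        nth_rewrite 1 [this]
        rw [add_smul]; abel
    have hxQ : x ∈ Q := by
      refine convexHull_min ?_ hQ hx
      rintro x ⟨A, hA, rfl⟩
      exact cone_lemma n m 𝓑 hcard hex B hB _ A hA rfl
    obtain ⟨w, hw, hxw⟩ := hxQ
    have hw1 : ∑ X ∈ S, w X = 1 := by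
      have h := congrArg (fun z : Fin n → ℝ => ∑ i ∈ B, z i) hxw
      simp only [Pi.sub_apply, Finset.sum_apply, Pi.smul_apply, smul_eq_mul,
        Finset.sum_sub_distrib] at h
      rw [hxs, hsumB, Finset.sum_comm] at h
      have h' : ∀ X ∈ S, ∑ i ∈ B, w X * (indVec n X i - indVec n B i) = - w X := by
        intro X hX
        obtain ⟨hX1, hX2⟩ := Finset.mem_filter.1 hX
        rw [← Finset.mul_sum, Finset.sum_sub_distrib, hsum X hX1 hX2, hsumB]; ring
      rw [Finset.sum_congr rfl h', Finset.sum_neg_distrib] at h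
      linarith
    have hxe : x = ∑ X ∈ S, w X • indVec n X := by
      simp only [smul_sub, Finset.sum_sub_distrib] at hxw
      rw [← Finset.sum_smul, hw1, one_smul] at hxw
      exact sub_left_injective hxw
    rw [hxe]
    refine (convex_convexHull ℝ _).sum_mem (fun X _ => hw X) hw1 ?_
    intro X hX
    obtain ⟨hX1, hX2⟩ := Finset.mem_filter.1 hX
    exact subset_convexHull ℝ _ ⟨X, hX1, hX2, rfl⟩
end

section
/- Let p be a tropical Plücker vector of rank m on {1,…,n}, let B ∈ supp(p), let v ∈ Σ_B, and let a ∈ {1,…,n}∖B. Then v is tropically orthogonal to the fundamental circuit c_{B∪{a}} if and only if there exists b ∈ B such that (B∪{a})∖{b} ∈ supp(p) and w_p(v,(B∪{a})∖{b}) ≥ w_p(v,A) for every A ∈ supp(p); that is, if and only if some basis of the form (B∪{a})∖{b} with b ∈ B also has maximal v-weight. -/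
open Finset

theorem circ_val_aux (n m : ℕ) (p : Finset (Fin n) → WithTop ℝ) (S : Finset (Fin n))
    (hS : S.card = m + 1) (v : Fin n → ℝ) (i : Fin n)
    (h : (v i : WithTop ℝ) + circVec n p S i ≠ ⊤) :
    i ∈ S ∧ suppMem n m p (S.erase i) ∧
      (v i : WithTop ℝ) + circVec n p S i
        = ((∑ j ∈ S, v j - wgt n p v (S.erase i) : ℝ) : WithTop ℝ) := by
  by_cases hi : i ∈ S
  · simp only [circVec, hi, if_true] at h ⊢
    have hq : p (S.erase i) ≠ ⊤ := by
      intro hq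
      simp [hq] at h
    refine ⟨trivial, ⟨by rw [Finset.card_erase_of_mem hi, hS]; rfl, hq⟩, ?_⟩
    obtain ⟨q, hq'⟩ := WithTop.ne_top_iff_exists.mp hq
    have hsum := Finset.add_sum_erase S v hi
    simp only [wgt, ← hq', WithTop.untopD_coe]
    rw [← WithTop.coe_add, WithTop.coe_inj]
    linarith
  · simp [circVec, hi] at h

/-- For `v ∈ Σ_B` and `a ∉ B`, `v` is tropically orthogonal to the
fundamental circuit `c_{B ∪ a}` iff some basis of the form `(B ∪ a) ∖ b` with `b ∈ B`
also has maximal `v`-weight. -/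
theorem orth_fundamental_circuit_iff (n m : ℕ) (hm : 1 ≤ m) (hmn : m ≤ n)
    (p : Finset (Fin n) → WithTop ℝ) (hp : IsTropPlucker n m p)
    (B : Finset (Fin n)) (hB : suppMem n m p B)
    (v : Fin n → ℝ) (hv : memSigma n m p B v) (a : Fin n) (ha : a ∉ B) :
    TropOrth n (fun i => (v i : WithTop ℝ)) (circVec n p (insert a B)) ↔
      ∃ b ∈ B, suppMem n m p ((insert a B).erase b) ∧
        ∀ A, suppMem n m p A → wgt n p v A ≤ wgt n p v ((insert a B).erase b) := by
  have hS : (insert a B).card = m + 1 := by rw [Finset.card_insert_of_notMem ha, hB.1]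
  have haS : (insert a B).erase a = B := Finset.erase_insert ha
  have key := circ_val_aux n m p (insert a B) hS v
  have fin : ∀ i ∈ insert a B, p ((insert a B).erase i) ≠ ⊤ →
      (v i : WithTop ℝ) + circVec n p (insert a B) i ≠ ⊤ := by
    intro i hi h
    simp only [circVec, hi, if_true]
    exact WithTop.add_ne_top.mpr ⟨WithTop.coe_ne_top, h⟩
  have hFa := fin a (Finset.mem_insert_self a B) (by rw [haS]; exact hB.2)
  have ka := (key a hFa).2.2
  rw [haS] at ka
  constructor
  · have main : ∀ b, b ≠ a → (v b : WithTop ℝ) + circVec n p (insert a B) b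
        ≤ (v a : WithTop ℝ) + circVec n p (insert a B) a →
        ∃ b ∈ B, suppMem n m p ((insert a B).erase b) ∧
        ∀ A, suppMem n m p A → wgt n p v A ≤ wgt n p v ((insert a B).erase b) := by
      intro b hb hle
      obtain ⟨h1, h2, h3⟩ := key b (ne_top_of_le_ne_top hFa hle)
      refine ⟨b, (Finset.mem_insert.mp h1).resolve_left hb, h2, fun A hA => ?_⟩
      rw [h3, ka, WithTop.coe_le_coe] at hle
      have := hv A hA
      linarith
    rintro (h | ⟨i, j, hij, he, hmin⟩)
    · exact absurd (h a) hFa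
    · by_cases hia : i = a
      · exact main j (fun h => hij (hia.trans h.symm)) (he ▸ hmin a)
      · exact main i hia (hmin a)
  · rintro ⟨b, hb, hs, hmax⟩
    have hFb := fin b (Finset.mem_insert_of_mem hb) hs.2
    have kb := (key b hFb).2.2
    have hw : wgt n p v ((insert a B).erase b) = wgt n p v B :=
      le_antisymm (hv _ hs) (hmax B hB)
    refine Or.inr ⟨a, b, fun h => ha (h ▸ hb), ?_, fun k => ?_⟩
    · exact ka.trans (by rw [kb, hw])
    · by_cases hk : (v k : WithTop ℝ) + circVec n p (insert a B) k = ⊤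
      · exact hk ▸ le_top
      · obtain ⟨_, h2, h3⟩ := key k hk
        show (v a : WithTop ℝ) + circVec n p (insert a B) a
          ≤ (v k : WithTop ℝ) + circVec n p (insert a B) k
        rw [ka, h3, WithTop.coe_le_coe]
        have := hv _ h2
        linarith
end
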